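/- arXiv:2506.01740 — 5 statements merged into one kernel-verified Lean document; each statement's English description precedes it below -/
import Mathlib

section
/- Let A be a commutative ring and I ⊆ A an ideal. Let M be a finitely presented A-module. Then M is a finitely generated projective A-module if and only if the following conditions hold: (b) the A/I-module M/IM is flat and the canonical map I ⊗_A M → M is injective (equivalently, Tor₁^A(A/I, M) = 0); (c) for every prime ideal 𝔭 of A with I ⊄ 𝔭, the localized module M_𝔭 is a flat A_𝔭-module. -/
open scoped TensorProduct

/-!
Choose a presentation `0 → K → Aⁿ → M → 0` with `K` finitely generated. Since `Aⁿ` is flat,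
injectivity of `P ⊗ K → P ⊗ Aⁿ` expresses `Tor₁(P, M) = 0`. By condition (b) this holds for
`P = A ⧸ I`, the sequence stays exact modulo `I` and ends in the flat module `M/IM`, so
`Tor₁(P, M) = 0` for every `A ⧸ I`-module `P`. A prime `𝔭 ⊇ I` has `κ(𝔭)` among these `P`, and
`Tor₁(κ(𝔭), M) = 0` makes the finitely presented module `M_𝔭` free by Nakayama. Condition (c)
covers the remaining primes, so `M` is flat.
-/

open Function

section Presentation

variable {A K N M : Type*} [CommRing A] [AddCommGroup K] [Module A K] [AddCommGroup N] [Module A N]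
  [AddCommGroup M] [Module A M] {f : K →ₗ[A] N} {g : N →ₗ[A] M}

theorem lTensor_baseChange_injective_iff {B P : Type*} [CommRing B] [Algebra A B]
    [AddCommGroup P] [Module A P] [Module B P] [IsScalarTower A B P] (f : K →ₗ[A] N) :
    Injective ((f.baseChange B).lTensor P) ↔ Injective (f.lTensor P) := by
  let eK := TensorProduct.AlgebraTensorModule.cancelBaseChange A B B P K
  let eN := TensorProduct.AlgebraTensorModule.cancelBaseChange A B B P N
  have naturality : f.lTensor P ∘ eK = eN ∘ (f.baseChange B).lTensor P :=
    congrArg DFunLike.coe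
      (TensorProduct.AlgebraTensorModule.lTensor_comp_cancelBaseChange A B B (M := P) f)
  rw [← eN.injective.of_comp_iff, ← naturality, Injective.of_comp_iff' _ eK.bijective]

theorem lTensor_injective_of_flat_baseChange {B : Type*} [CommRing B] [Algebra A B]
    [Module.Flat B (B ⊗[A] M)] (hfg : Exact f g) (hg : Surjective g)
    (hf : Injective (f.lTensor B)) (P : Type*) [AddCommGroup P] [Module A P] [Module B P]
    [IsScalarTower A B P] : Injective (f.lTensor P) := by
  rw [← lTensor_baseChange_injective_iff (B := B)]
  exact LinearMap.lTensor_injective_of_exact_of_flat (g.baseChange B) (g.lTensor_surjective B hg)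
    (f.baseChange B) hf (lTensor_exact B hfg hg) P

theorem lTensor_injective_of_flat_quotient [Module.Flat A N] {I : Ideal A}
    [Module.Flat (A ⧸ I) ((A ⧸ I) ⊗[A] M)] (hI : Injective (I.subtype.rTensor M))
    (hf : Injective f) (hfg : Exact f g) (hg : Surjective g)
    (P : Type*) [AddCommGroup P] [Module A P] [Module (A ⧸ I) P] [IsScalarTower A (A ⧸ I) P] :
    Injective (f.lTensor P) := by
  -- Symmetry of `Tor`: `hI` is `Tor₁(A ⧸ I, M) = 0` computed by resolving `A ⧸ I`, while `hquot`
  -- is the same vanishing computed by resolving `M`.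
  have hquot : Injective (f.lTensor (A ⧸ I)) :=
    lTensor_injective_of_exact_of_exact_of_rTensor_injective
      (LinearMap.exact_subtype_mkQ I) I.mkQ_surjective hfg hg hI
      (Module.Flat.lTensor_preserves_injective_linearMap f hf)
  exact lTensor_injective_of_flat_baseChange hfg hg hquot P

theorem free_localizedModule_of_lTensor_residueField_injective [Module.Finite A K]
    [Module.Finite A N] [Module.Free A N] (hfg : Exact f g) (hg : Surjective g)
    (p : Ideal A) [p.IsPrime] (hf : Injective (f.lTensor p.ResidueField)) :
    Module.Free (Localization.AtPrime p) (LocalizedModule p.primeCompl M) := by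
  let Aₚ := Localization.AtPrime p
  have : Module.Free Aₚ (Aₚ ⊗[A] M) :=
    Module.free_of_lTensor_residueField_injective (f.baseChange Aₚ) (g.baseChange Aₚ)
      (g.lTensor_surjective Aₚ hg) (lTensor_exact Aₚ hfg hg)
      ((lTensor_baseChange_injective_iff f).mpr hf)
  exact .of_equiv (LocalizedModule.equivTensorProduct p.primeCompl M).symm

end Presentation

section FinitePresentation

variable {A M : Type*} [CommRing A] [AddCommGroup M] [Module A M] [Module.FinitePresentation A M]
  {I : Ideal A} [Module.Flat (A ⧸ I) ((A ⧸ I) ⊗[A] M)]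

theorem free_localizedModule_of_flat_quotient (hI : Injective (I.subtype.rTensor M))
    {p : Ideal A} [p.IsPrime] (hp : I ≤ p) :
    Module.Free (Localization.AtPrime p) (LocalizedModule p.primeCompl M) := by
  obtain ⟨n, K, e, hK⟩ := Module.FinitePresentation.exists_fin A M
  have : Module.Finite A K := .of_fg hK
  let g : (Fin n → A) →ₗ[A] M := e.symm.toLinearMap ∘ₗ K.mkQ
  have hg : Surjective g := e.symm.surjective.comp K.mkQ_surjective
  have hKg : Exact K.subtype g :=
    (LinearMap.exact_subtype_mkQ K).comp_injective _ e.symm.injective (map_zero e.symm)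
  let : Algebra (A ⧸ I) p.ResidueField :=
    (Ideal.Quotient.lift I (algebraMap A p.ResidueField)
      fun a ha ↦ Ideal.algebraMap_residueField_eq_zero.mpr (hp ha)).toAlgebra
  have : IsScalarTower A (A ⧸ I) p.ResidueField := .of_algebraMap_eq fun _ ↦ rfl
  exact free_localizedModule_of_lTensor_residueField_injective hKg hg p
    (lTensor_injective_of_flat_quotient hI K.subtype_injective hKg hg p.ResidueField)

theorem flat_of_flat_quotient_of_flat_localizedModule (hI : Injective (I.subtype.rTensor M))
    (hloc : ∀ (p : Ideal A) [p.IsMaximal], ¬ I ≤ p →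
      Module.Flat (Localization.AtPrime p) (LocalizedModule p.primeCompl M)) :
    Module.Flat A M := by
  refine Module.flat_of_localized_maximal M fun p _ ↦ ?_
  rw [← Module.flat_iff_of_isLocalization (Localization.AtPrime p) p.primeCompl]
  by_cases hp : I ≤ p
  · have := free_localizedModule_of_flat_quotient hI hp
    infer_instance
  · exact hloc p hp

end FinitePresentation

theorem flatness_criterion_general {A : Type*} [CommRing A] (I : Ideal A) (M : Type*)
    [AddCommGroup M] [Module A M] [Module.FinitePresentation A M] :
    (Module.Finite A M ∧ Module.Projective A M) ↔
      ((Module.Flat (A ⧸ I) ((A ⧸ I) ⊗[A] M) ∧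
          Injective (TensorProduct.lift ((LinearMap.lsmul A M).comp I.subtype))) ∧
        ∀ (p : Ideal A) [p.IsPrime], ¬ I ≤ p →
          Module.Flat (Localization.AtPrime p) (LocalizedModule p.primeCompl M)) := by
  rw [← LinearMap.lid_comp_rTensor, LinearMap.coe_comp, LinearEquiv.coe_coe,
    (TensorProduct.lid A M).injective.of_comp_iff]
  constructor
  · rintro ⟨-, _⟩
    exact ⟨⟨inferInstance, Module.Flat.rTensor_preserves_injective_linearMap _ I.subtype_injective⟩,
      fun p _ _ ↦ .of_isLocalizedModule _ p.primeCompl (LocalizedModule.mkLinearMap _ _)⟩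
  · rintro ⟨⟨_, hI⟩, hloc⟩
    have : Module.Flat A M :=
      flat_of_flat_quotient_of_flat_localizedModule hI fun p _ hp ↦ hloc p hp
    exact ⟨inferInstance, Module.Flat.projective_of_finitePresentation⟩

/-- **Flatness criterion** (Proposition `FlatnessCrit`): for a finitely presented module `M`
over a commutative ring `A` and an ideal `I ⊆ A`, the module `M` is finitely generated
projective if and only if (b) `M/IM ≅ (A/I) ⊗[A] M` is a flat `A/I`-module and the canonical map
`I ⊗[A] M → M` is injective, and (c) for every prime `𝔭` of `A` not containing `I`, the
localization `M_𝔭` is a flat `A_𝔭`-module. -/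
theorem flatness_criterion {A : Type} [CommRing A] (I : Ideal A)
    (M : Type) [AddCommGroup M] [Module A M] [Module.FinitePresentation A M] :
    (Module.Finite A M ∧ Module.Projective A M) ↔
      ((Module.Flat (A ⧸ I) ((A ⧸ I) ⊗[A] M) ∧
          Function.Injective (TensorProduct.lift ((LinearMap.lsmul A M).comp I.subtype))) ∧
        ∀ (p : Ideal A) [p.IsPrime], ¬ I ≤ p →
          Module.Flat (Localization.AtPrime p) (LocalizedModule p.primeCompl M)) :=
  flatness_criterion_general I M
end

section
/- Let A be a commutative ring and I an ideal contained in the Jacobson radical of A. Let M be a finitely presented A-module such that the A/I-module M/IM is flat and the canonical map I ⊗_A M → M is injective (equivalently Tor₁^A(A/I, M) = 0). Then M is a finitely generated projective A-module. -/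
open scoped TensorProduct

/-!
Choose a finite free cover `F → M` with kernel `K`, which is finitely generated. Injectivity of
`I ⊗ M → M` makes `K/IK → F/IF` injective, and it then splits because its cokernel `M/IM` is
finitely presented and flat, hence projective, over `A/I`. As `F` is projective, the retraction
`F/IF → K/IK` lifts to a map `F → K`. Its restriction to `K` is an endomorphism that is the identity
modulo `I`, hence an automorphism by Nakayama, so `K → F` already splits over `A`
and `M` is a direct summand of `F`.
-/

section

open Function

theorem exists_baseChange_eq_of_surjective_algebraMap {A B F K : Type*} [CommSemiring A]
    [Semiring B] [Algebra A B] [AddCommMonoid F] [Module A F] [AddCommMonoid K] [Module A K]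
    [Module.Projective A F] (hB : Surjective (algebraMap A B)) (l : B ⊗[A] F →ₗ[B] B ⊗[A] K) :
    ∃ r : F →ₗ[A] K, r.baseChange B = l := by
  obtain ⟨r, hr⟩ := Module.projective_lifting_property (TensorProduct.mk A B K 1)
    (l.restrictScalars A ∘ₗ TensorProduct.mk A B F 1) (TensorProduct.mk_surjective A K B hB)
  exact ⟨r, TensorProduct.AlgebraTensorModule.curry_injective
    (LinearMap.ext_ring (LinearMap.ext fun x ↦ LinearMap.congr_fun hr x))⟩

theorem exists_retraction_of_exact_of_projective {R K F M : Type*} [Ring R] [AddCommGroup K]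
    [Module R K] [AddCommGroup F] [Module R F] [AddCommGroup M] [Module R M]
    [Module.Projective R M] {ι : K →ₗ[R] F} {f : F →ₗ[R] M} (hι : Injective ι)
    (hf : Surjective f) (h : Exact ι f) : ∃ r, r ∘ₗ ι = LinearMap.id :=
  ((Exact.split_tfae h hι hf).out 0 1).mp (Module.projective_lifting_property f _ hf)

variable {A K F M N : Type*} [CommRing A] [AddCommGroup K] [Module A K] [AddCommGroup F]
  [Module A F] [AddCommGroup M] [Module A M] [AddCommGroup N] [Module A N] {I : Ideal A}

theorem surjective_of_baseChange_quotient_surjective [Module.Finite A N]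
    (hI : I ≤ Ideal.jacobson ⊥) {φ : M →ₗ[A] N}
    (hφ : Surjective (φ.baseChange (A ⧸ I))) : Surjective φ := by
  rw [← LinearMap.range_eq_top, ← top_le_iff]
  refine Submodule.le_of_le_smul_of_le_jacobson_bot Module.Finite.fg_top hI fun n _ ↦ ?_
  obtain ⟨x, hx⟩ := hφ (1 ⊗ₜ n)
  obtain ⟨m, rfl⟩ := TensorProduct.mk_surjective A M (A ⧸ I) Ideal.Quotient.mk_surjective x
  have hn : n - φ m ∈ I • (⊤ : Submodule A N) := by
    rw [← LinearMap.ker_tensorProductMk, LinearMap.sub_mem_ker_iff]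
    exact hx.symm
  rw [← add_sub_cancel (φ m) n]
  exact Submodule.add_mem_sup (LinearMap.mem_range_self φ m) hn

theorem exists_retraction_of_baseChange_quotient_retraction [Module.Finite A K]
    [Module.Projective A F] (hI : I ≤ Ideal.jacobson ⊥) {ι : K →ₗ[A] F}
    (hι : ∃ l, l ∘ₗ ι.baseChange (A ⧸ I) = LinearMap.id) : ∃ r, r ∘ₗ ι = LinearMap.id := by
  obtain ⟨l, hl⟩ := hι
  obtain ⟨r, rfl⟩ := exists_baseChange_eq_of_surjective_algebraMap Ideal.Quotient.mk_surjective l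
  rw [← LinearMap.baseChange_comp] at hl
  have hsurj : Surjective (r ∘ₗ ι) :=
    surjective_of_baseChange_quotient_surjective hI (hl ▸ surjective_id)
  let e := LinearEquiv.ofBijective (r ∘ₗ ι)
    (OrzechProperty.bijective_of_surjective_endomorphism _ hsurj)
  exact ⟨e.symm ∘ₗ r, LinearMap.ext e.symm_apply_apply⟩

theorem baseChange_quotient_injective_of_exact [Module.Flat A F] {ι : K →ₗ[A] F} {f : F →ₗ[A] M}
    (hι : Injective ι) (hf : Surjective f) (h : Exact ι f)
    (hM : Injective (I.subtype.rTensor M)) : Injective (ι.baseChange (A ⧸ I)) :=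
  lTensor_injective_of_exact_of_exact_of_rTensor_injective (LinearMap.exact_subtype_mkQ I)
    I.mkQ_surjective h hf hM (Module.Flat.lTensor_preserves_injective_linearMap ι hι)

theorem projective_of_exact_of_projective_quotient [Module.Finite A K] [Module.Projective A F]
    [Module.Projective (A ⧸ I) ((A ⧸ I) ⊗[A] M)] (hI : I ≤ Ideal.jacobson ⊥) {ι : K →ₗ[A] F}
    {f : F →ₗ[A] M} (hι : Injective ι) (hf : Surjective f) (h : Exact ι f)
    (hM : Injective (I.subtype.rTensor M)) : Module.Projective A M := by
  have hretract : ∃ l, l ∘ₗ ι.baseChange (A ⧸ I) = LinearMap.id :=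
    exists_retraction_of_exact_of_projective (baseChange_quotient_injective_of_exact hι hf h hM)
      (f.baseChange_surjective _ hf) (lTensor_exact _ h hf)
  obtain ⟨s, hs⟩ := ((Exact.split_tfae h hι hf).out 0 1).mpr
    (exists_retraction_of_baseChange_quotient_retraction hI hretract)
  exact .of_split s f hs

theorem flatness_criterion_jacobson_general (hI : I ≤ Ideal.jacobson ⊥)
    [Module.FinitePresentation A M] [Module.Flat (A ⧸ I) ((A ⧸ I) ⊗[A] M)]
    (hM : Injective (TensorProduct.lift ((LinearMap.lsmul A M).comp I.subtype))) :
    Module.Projective A M := by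
  rw [← LinearMap.lid_comp_rTensor, LinearMap.coe_comp] at hM
  obtain ⟨n, f, hf⟩ := Module.Finite.exists_fin' A M
  have : Module.Finite A (LinearMap.ker f) := .of_fg (Module.FinitePresentation.fg_ker f hf)
  have : Module.Projective (A ⧸ I) ((A ⧸ I) ⊗[A] M) := Module.Flat.projective_of_finitePresentation
  exact projective_of_exact_of_projective_quotient hI (Submodule.injective_subtype _) hf
    f.exact_subtype_ker_map hM.of_comp

end

/-- **Flatness criterion, Jacobson-radical case** (Remark following `FlatnessCrit`):
if `I` is contained in the Jacobson radical of `A`, `M` is a finitely presented `A`-module such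
that `M/IM ≅ (A/I) ⊗[A] M` is flat over `A/I` and the canonical map `I ⊗[A] M → M` is injective,
then `M` is a finitely generated projective `A`-module. -/
theorem flatness_criterion_jacobson {A : Type} [CommRing A] (I : Ideal A)
    (hI : I ≤ Ideal.jacobson (⊥ : Ideal A))
    (M : Type) [AddCommGroup M] [Module A M] [Module.FinitePresentation A M]
    (h1 : Module.Flat (A ⧸ I) ((A ⧸ I) ⊗[A] M))
    (h2 : Function.Injective (TensorProduct.lift ((LinearMap.lsmul A M).comp I.subtype))) :
    Module.Finite A M ∧ Module.Projective A M := by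
  exact ⟨inferInstance, flatness_criterion_jacobson_general hI h2⟩
end

section
/- Let A be a commutative ring, I ⊆ A an ideal, B a commutative A-algebra of finite presentation, and M a finitely presented B-module. Assume: (a) the A/I-module M/IM is flat and the canonical map I ⊗_A M → M is injective (equivalently Tor₁^A(A/I, M) = 0); (b) for every prime ideal 𝔮 of B whose contraction 𝔭 to A does not contain I, the localized module M_𝔮 is a flat A_𝔭-module. Then M is a flat A-module. -/
open scoped TensorProduct

/-!
Flatness may be checked after localising at the maximal ideals `𝔮` of `B`. If `𝔮` does not lie over
`I`, hypothesis (b) applies. If it does, (a) gives `Tor₁^A(A/𝔭, M) = 0` for the contraction `𝔭` of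
`𝔮`, and the local criterion for flatness shows that `M_𝔮` is flat. For the latter write `M = F / L`
with `F` finite free over a polynomial ring `P` over `A`, so that
`Tor₁^A(A/J, M) = (L ∩ J F) / J L`. Over a Noetherian base, dévissage along `0 → A/(J : a) → A/J →
A/(J + a) → 0` and the Artin–Rees lemma carry the vanishing at `𝔮` from `J = 𝔭` to every `J`.
In general `L` is extended from a finitely generated subring `R` of `A`, and enlarging `R` by
finitely many elements secures the vanishing at `𝔮` for `J = 𝔭 ∩ R` already over `R`.
-/

section IdealTensorMul

variable {A F M : Type*} [CommRing A] [AddCommGroup F] [Module A F] [AddCommGroup M] [Module A M]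

/-- The multiplication map `J ⊗ M → M`; its kernel is `Tor₁^A(A/J, M)`. -/
abbrev idealTensorMul (J : Ideal A) (M : Type*) [AddCommGroup M] [Module A M] :
    J ⊗[A] M →ₗ[A] M :=
  TensorProduct.lift ((LinearMap.lsmul A M).comp J.subtype)

theorem range_idealTensorMul_comp_lTensor_subtype (J : Ideal A) (N : Submodule A F) :
    LinearMap.range (idealTensorMul J F ∘ₗ N.subtype.lTensor J) = J • N := by
  apply le_antisymm
  · rintro _ ⟨t, rfl⟩
    induction t with
    | zero => simp only [map_zero, zero_mem]
    | tmul r x => exact Submodule.smul_mem_smul r.2 x.2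
    | add t u ht hu => simpa only [map_add] using add_mem ht hu
  · exact Submodule.smul_le.2 fun r hr x hx ↦ ⟨⟨r, hr⟩ ⊗ₜ ⟨x, hx⟩, rfl⟩

theorem idealTensorMul_comp_lTensor (J : Ideal A) (f : F →ₗ[A] M) :
    idealTensorMul J M ∘ₗ f.lTensor J = f ∘ₗ idealTensorMul J F :=
  TensorProduct.ext' fun r x ↦ (f.map_smul (r : A) x).symm

theorem smul_top_inf_ker_le_smul_ker {J : Ideal A} {f : F →ₗ[A] M} (hf : Function.Surjective f)
    (hJ : Function.Injective (idealTensorMul J M)) :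
    J • ⊤ ⊓ LinearMap.ker f ≤ J • LinearMap.ker f := by
  rintro x ⟨hx, hfx⟩
  rw [← range_idealTensorMul_comp_lTensor_subtype] at hx ⊢
  obtain ⟨t, rfl⟩ := hx
  have ht : f.lTensor J ((⊤ : Submodule A F).subtype.lTensor J t) = 0 :=
    hJ (by rw [map_zero, ← LinearMap.comp_apply, idealTensorMul_comp_lTensor]; exact hfx)
  obtain ⟨u, hu⟩ := (lTensor_exact J (LinearMap.exact_subtype_ker_map f) hf _).1 ht
  exact ⟨u, congrArg (idealTensorMul J F) hu⟩

theorem rTensor_injective_of_flat_baseChange {R S M N N' : Type*} [CommRing R] [CommRing S]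
    [Algebra R S] [AddCommGroup M] [Module R M] [AddCommGroup N] [Module R N] [Module S N]
    [IsScalarTower R S N] [AddCommGroup N'] [Module R N'] [Module S N'] [IsScalarTower R S N']
    [Module.Flat S (S ⊗[R] M)] {f : N →ₗ[S] N'} (hf : Function.Injective f) :
    Function.Injective ((f.restrictScalars R).rTensor M) := by
  let e := TensorProduct.AlgebraTensorModule.cancelBaseChange R S S N M
  let e' := TensorProduct.AlgebraTensorModule.cancelBaseChange R S S N' M
  have he : TensorProduct.AlgebraTensorModule.rTensor R M f ∘ₗ e.toLinearMap =
      e'.toLinearMap ∘ₗ f.rTensor (S ⊗[R] M) := by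
    ext
    simp [e, e']
  have h := e'.injective.comp (Module.Flat.rTensor_preserves_injective_linearMap f hf)
  rw [← LinearEquiv.coe_coe, ← LinearMap.coe_comp, ← he, LinearMap.coe_comp] at h
  exact h.of_comp_right e.surjective

theorem idealTensorMul_injective_of_le {I J : Ideal A} (hIJ : I ≤ J)
    [Module.Flat (A ⧸ I) ((A ⧸ I) ⊗[A] M)] (hI : Function.Injective (idealTensorMul I M)) :
    Function.Injective (idealTensorMul J M) := by
  let K : Ideal (A ⧸ I) := J.map (Ideal.Quotient.mk I)
  let incl : I →ₗ[A] J := Submodule.inclusion hIJ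
  let proj : J →ₗ[A] K :=
    (Ideal.Quotient.mkₐ A I).toLinearMap.restrict (q := K.restrictScalars A)
      fun _ ↦ Ideal.mem_map_of_mem _
  have hproj : Function.Surjective proj := fun ⟨y, hy⟩ ↦ by
    obtain ⟨x, hx, rfl⟩ := (Ideal.mem_map_iff_of_surjective _ Ideal.Quotient.mk_surjective).1 hy
    exact ⟨⟨x, hx⟩, rfl⟩
  have hexact : Function.Exact incl proj := fun x ↦ by
    rw [Subtype.ext_iff]
    exact Ideal.Quotient.eq_zero_iff_mem.trans ⟨fun h ↦ ⟨⟨x, h⟩, rfl⟩, fun ⟨y, h⟩ ↦ h ▸ y.2⟩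
  have hincl : idealTensorMul J M ∘ₗ incl.rTensor M = idealTensorMul I M :=
    TensorProduct.ext' fun _ _ ↦ rfl
  have hcomm : (K.subtype.restrictScalars A).rTensor M ∘ₗ proj.rTensor M =
      TensorProduct.mk A (A ⧸ I) M 1 ∘ₗ idealTensorMul J M :=
    TensorProduct.ext' fun r x ↦ by
      change Ideal.Quotient.mk I r ⊗ₜ[A] x = 1 ⊗ₜ[A] ((r : A) • x)
      rw [TensorProduct.tmul_smul, TensorProduct.smul_tmul', ← Algebra.algebraMap_eq_smul_one,
        Ideal.Quotient.algebraMap_eq]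
  rw [injective_iff_map_eq_zero]
  intro z hz
  have hprojz : proj.rTensor M z = 0 := by
    apply rTensor_injective_of_flat_baseChange (R := A) K.injective_subtype
    rw [← LinearMap.comp_apply, hcomm, LinearMap.comp_apply, hz, map_zero, map_zero]
  obtain ⟨w, rfl⟩ := (rTensor_exact M hexact hproj z).1 hprojz
  rw [← LinearMap.comp_apply, hincl] at hz
  rw [hI (hz.trans (map_zero _).symm), map_zero]

end IdealTensorMul

section FlatModule

variable {A F : Type*} [CommRing A] [AddCommGroup F] [Module A F]

theorem one_tmul_eq_zero_iff_mem_smul_top {J : Ideal A} {x : F} :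
    (1 : A ⧸ J) ⊗ₜ[A] x = 0 ↔ x ∈ J • (⊤ : Submodule A F) := by
  rw [← (TensorProduct.quotTensorEquivQuotSMul F J).map_eq_zero_iff,
    ← map_one (Ideal.Quotient.mk J), TensorProduct.quotTensorEquivQuotSMul_mk_tmul, one_smul,
    Submodule.Quotient.mk_eq_zero]

theorem mem_colon_smul_top_of_smul_mem [Module.Flat A F] {J : Ideal A} {a : A} {x : F}
    (hx : a • x ∈ J • (⊤ : Submodule A F)) : x ∈ J.colon {a} • (⊤ : Submodule A F) := by
  have hle : J.colon {a} = Submodule.comap (LinearMap.mulRight A a) J := by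
    ext b
    exact Submodule.mem_colon_singleton
  let μ : (A ⧸ J.colon {a}) →ₗ[A] A ⧸ J :=
    Submodule.mapQ _ J (LinearMap.mulRight A a) hle.le
  have hμ : Function.Injective μ := by
    rw [← LinearMap.ker_eq_bot, Submodule.ker_mapQ, ← hle, Submodule.mkQ_map_self]
  rw [← one_tmul_eq_zero_iff_mem_smul_top] at hx ⊢
  apply Module.Flat.rTensor_preserves_injective_linearMap μ hμ
  rw [map_zero, LinearMap.rTensor_tmul, ← hx, TensorProduct.tmul_smul, TensorProduct.smul_tmul']
  congr 1
  change Ideal.Quotient.mk J (1 * a) = Ideal.Quotient.mk J (a * 1)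
  rw [mul_comm]

theorem mem_span_range_smul_iff {ι : Type*} [Fintype ι] {f : ι → A} {N : Submodule A F} {x : F} :
    x ∈ Ideal.span (Set.range f) • N ↔ ∃ y : ι → F, (∀ i, y i ∈ N) ∧ ∑ i, f i • y i = x := by
  constructor
  · intro hx
    induction hx using Submodule.smul_induction_on' with
    | smul r hr n hn =>
      obtain ⟨c, rfl⟩ := Ideal.mem_span_range_iff_exists_fun.1 hr
      exact ⟨fun i ↦ c i • n, fun i ↦ N.smul_mem _ hn, by
        simp only [smul_smul, Finset.sum_smul, mul_comm]⟩
    | add x _ y _ hx hy =>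
      obtain ⟨u, hu, rfl⟩ := hx
      obtain ⟨v, hv, rfl⟩ := hy
      exact ⟨u + v, fun i ↦ add_mem (hu i) (hv i), by
        simp only [Pi.add_apply, smul_add, Finset.sum_add_distrib]⟩
  · rintro ⟨y, hy, rfl⟩
    exact sum_mem fun i _ ↦ Submodule.smul_mem_smul (Ideal.subset_span ⟨i, rfl⟩) (hy i)

end FlatModule

theorem exists_colon_singleton_eq {A : Type*} [CommRing A] [IsNoetherianRing A]
    {p J : Ideal A} [hp : p.IsPrime] {n : ℕ} (hn : p ^ n ≤ J) (hJ : J ≤ p) :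
    ∃ a, J.colon {a} = p := by
  have hmin : p ∈ (J.colon {1}).minimalPrimes := by
    rw [show J.colon {1} = J from Ideal.ext fun b ↦ by
      rw [Submodule.mem_colon_singleton, smul_eq_mul, mul_one]]
    exact ⟨⟨hp, hJ⟩, fun q hq _ ↦ hq.1.le_of_pow_le (hn.trans hq.2)⟩
  obtain ⟨a, ha⟩ := Submodule.exists_eq_colon_of_mem_minimalPrimes hmin
  exact ⟨a, ha.symm⟩

theorem exists_smul_mem_of_forall_smul_mem_sup_pow_smul {P F : Type*} [CommRing P]
    [AddCommGroup F] [Module P F] [IsNoetherianRing P] [Module.Finite P F] {a q : Ideal P}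
    [q.IsPrime] (ha : a ≤ q) {K : Submodule P F} {x : F}
    (hx : ∀ n : ℕ, ∃ s ∉ q, s • x ∈ K ⊔ a ^ n • ⊤) : ∃ s ∉ q, s • x ∈ K := by
  -- Artin–Rees for the submodule generated by `x` yields `s • x ∈ a • x` in `F ⧸ K`.
  let N : Submodule P (F ⧸ K) := Submodule.span P {K.mkQ x}
  obtain ⟨k, hk⟩ := a.exists_pow_inf_eq_pow_smul N
  obtain ⟨s, hs, hsx⟩ := hx (k + 1)
  have hmem : K.mkQ (s • x) ∈ a ^ (k + 1) • ⊤ ⊓ N := by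
    constructor
    · have h := Submodule.mem_map_of_mem (f := K.mkQ) hsx
      rwa [Submodule.map_sup, Submodule.mkQ_map_self, bot_sup_eq, Submodule.map_smul'',
        Submodule.map_top, Submodule.range_mkQ] at h
    · rw [map_smul]
      exact Submodule.smul_mem _ _ (Submodule.mem_span_singleton_self _)
  rw [hk (k + 1) k.le_succ, Nat.add_sub_cancel_left, pow_one] at hmem
  obtain ⟨c, hc, hcx⟩ := Submodule.mem_smul_span_singleton.1
    (Submodule.smul_mono le_rfl inf_le_right hmem)
  refine ⟨s - c, fun h ↦ hs ((Submodule.sub_mem_iff_left q (ha hc)).1 h), ?_⟩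
  rw [← Submodule.Quotient.mk_eq_zero, ← Submodule.mkQ_apply, sub_smul, map_sub, map_smul _ c, hcx,
    sub_self]

section TorOneVanishesAt

variable {A P F : Type*} [CommRing A] [CommRing P] [Algebra A P] [AddCommGroup F] [Module P F]
  {L : Submodule P F} {q : Ideal P}

/-- The vanishing of `Tor₁^A(A/J, F/L)` at the prime `q`, for `F` flat over `A`: that group is
`(L ∩ J F) / J L`, and its localisation at `q` vanishes if and only if every element is killed by
some `s ∉ q`. -/
def TorOneVanishesAt (J : Ideal A) (L : Submodule P F) (q : Ideal P) : Prop :=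
  ∀ x ∈ L, x ∈ J.map (algebraMap A P) • (⊤ : Submodule P F) →
    ∃ s ∉ q, s • x ∈ J.map (algebraMap A P) • L

theorem TorOneVanishesAt.of_not_le {J : Ideal A} (hJ : ¬ J ≤ q.under A) :
    TorOneVanishesAt J L q := by
  intro x hx _
  obtain ⟨s, hsJ, hsq⟩ := SetLike.not_le_iff_exists.1 hJ
  exact ⟨algebraMap A P s, hsq, Submodule.smul_mem_smul (Ideal.mem_map_of_mem _ hsJ) hx⟩

variable [Module A F] [IsScalarTower A P F]

theorem mem_map_smul_iff {J : Ideal A} {N : Submodule P F} {x : F} :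
    x ∈ J.map (algebraMap A P) • N ↔ x ∈ J • N.restrictScalars A := by
  rw [← Ideal.smul_restrictScalars, Submodule.restrictScalars_mem]

-- The exact sequence `0 → A/(J : a) → A/J → A/(J + a) → 0`, on `Tor₁`.
theorem TorOneVanishesAt.of_sup_span_singleton [Module.Flat A F] [q.IsPrime] {J : Ideal A} {a : A}
    (h : TorOneVanishesAt (J ⊔ Ideal.span {a}) L q) (ha : TorOneVanishesAt (J.colon {a}) L q) :
    TorOneVanishesAt J L q := by
  have hle : Ideal.span {algebraMap A P a} * (J.colon {a}).map (algebraMap A P) ≤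
      J.map (algebraMap A P) := by
    rw [← Set.image_singleton, ← Ideal.map_span, ← Ideal.map_mul]
    refine Ideal.map_mono (Ideal.span_singleton_mul_le_iff.2 fun b hb ↦ ?_)
    rw [mul_comm]
    exact Submodule.mem_colon_singleton.1 hb
  intro x hxL hx
  obtain ⟨s, hs, hsx⟩ := h x hxL (Submodule.smul_mono_left (Ideal.map_mono le_sup_left) hx)
  rw [Ideal.map_sup, Submodule.sup_smul, Ideal.map_span, Set.image_singleton,
    Submodule.ideal_span_singleton_smul, Submodule.mem_sup] at hsx
  obtain ⟨y, hy, z, hz, hyz⟩ := hsx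
  obtain ⟨l, hl, rfl⟩ := (Submodule.mem_smul_pointwise_iff_exists _ _ _).1 hz
  have hal : algebraMap A P a • l ∈ J.map (algebraMap A P) • (⊤ : Submodule P F) := by
    rw [eq_sub_of_add_eq' hyz]
    exact sub_mem (Submodule.smul_mem _ _ hx) (Submodule.smul_mono le_rfl le_top hy)
  have hlp : l ∈ (J.colon {a}).map (algebraMap A P) • (⊤ : Submodule P F) := by
    rw [mem_map_smul_iff] at hal ⊢
    rw [algebraMap_smul] at hal
    exact mem_colon_smul_top_of_smul_mem hal
  obtain ⟨t, ht, htl⟩ := ha l hl hlp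
  refine ⟨t * s, ‹q.IsPrime›.mul_notMem ht hs, ?_⟩
  rw [mul_smul, ← hyz, smul_add, smul_comm t]
  refine add_mem (Submodule.smul_mem _ _ hy) ?_
  refine Submodule.smul_mono_left hle ?_
  rw [Submodule.mul_smul]
  exact Submodule.smul_mem_smul (Ideal.mem_span_singleton_self _) htl

theorem TorOneVanishesAt.of_under_pow_le [IsNoetherianRing A] [Module.Flat A F] [q.IsPrime]
    (h : TorOneVanishesAt (q.under A) L q) {n : ℕ} {J : Ideal A} (hJ : q.under A ^ n ≤ J) :
    TorOneVanishesAt J L q := by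
  induction J using WellFoundedGT.induction with
  | ind J ih =>
  by_cases hJq : J ≤ q.under A
  · obtain ⟨a, ha⟩ := exists_colon_singleton_eq hJ hJq
    have haJ : a ∉ J := fun haJ ↦ (‹q.IsPrime›.under A).ne_top
      ((Ideal.eq_top_iff_one _).2 (ha ▸ Submodule.mem_colon_singleton.2 (by simpa using haJ)))
    have hlt : J < J ⊔ Ideal.span {a} := by
      rwa [left_lt_sup, Ideal.span_singleton_le_iff_mem]
    exact (ih _ hlt (hJ.trans le_sup_left)).of_sup_span_singleton (ha ▸ h)
  · exact .of_not_le hJq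

theorem TorOneVanishesAt.of_under [IsNoetherianRing A] [IsNoetherianRing P] [Module.Finite P F]
    [Module.Flat A F] [q.IsPrime] (h : TorOneVanishesAt (q.under A) L q) (J : Ideal A) :
    TorOneVanishesAt J L q := by
  intro x hxL hx
  have hJ : ∀ n : ℕ, ∃ s ∉ q, s • (⟨x, hxL⟩ : L) ∈
      J.map (algebraMap A P) • ⊤ ⊔ (q.under A).map (algebraMap A P) ^ n • (⊤ : Submodule P L) := by
    intro n
    obtain ⟨s, hs, hsx⟩ := h.of_under_pow_le (le_sup_right (a := J) (b := q.under A ^ n)) x hxL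
      (Submodule.smul_mono_left (Ideal.map_mono le_sup_left) hx)
    refine ⟨s, hs, ?_⟩
    rwa [← Submodule.sup_smul, ← Ideal.map_pow, ← Ideal.map_sup, Submodule.mem_smul_top_iff]
  obtain ⟨s, hs, hsx⟩ := exists_smul_mem_of_forall_smul_mem_sup_pow_smul Ideal.map_comap_le hJ
  exact ⟨s, hs, (Submodule.mem_smul_top_iff _ L _).1 hsx⟩

theorem flat_of_torOneVanishesAt {M M' : Type*} [AddCommGroup M] [Module P M] [Module A M]
    [IsScalarTower A P M] [AddCommGroup M'] [Module P M'] [Module A M'] [IsScalarTower A P M']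
    [Module.Flat A F] [q.IsPrime] {π : F →ₗ[P] M} (hπ : Function.Surjective π) (g : M →ₗ[P] M')
    [IsLocalizedModule q.primeCompl g]
    (h : ∀ J : Ideal A, TorOneVanishesAt J (LinearMap.ker π) q) : Module.Flat A M' := by
  refine Module.Flat.of_forall_isTrivialRelation fun {l f m} hm ↦ ?_
  obtain ⟨b, hb⟩ := IsLocalizedModule.exist_integer_multiples_of_finite q.primeCompl g m
  choose n hn using hb
  choose e he using fun i ↦ hπ (n i)
  have hsum : g (π (∑ i, f i • e i)) = 0 := by
    simp only [map_sum, LinearMap.map_smul_of_tower, he, hn, smul_comm (f _), ← Finset.smul_sum, hm,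
      smul_zero]
  obtain ⟨c, hc⟩ := (IsLocalizedModule.eq_zero_iff q.primeCompl g).1 hsum
  have hmem : ∑ i, f i • (c : P) • e i ∈
      (Ideal.span (Set.range f)).map (algebraMap A P) • (⊤ : Submodule P F) :=
    mem_map_smul_iff.2 (mem_span_range_smul_iff.2 ⟨_, fun _ ↦ trivial, rfl⟩)
  obtain ⟨d, hd, hde⟩ := h _ _ (by
    simp only [smul_comm (f _), ← Finset.smul_sum]
    rw [LinearMap.mem_ker, map_smul]
    exact hc) hmem
  obtain ⟨y, hy, hyx⟩ := mem_span_range_smul_iff.1 (mem_map_smul_iff.1 hde)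
  have hrel : ∑ i, f i • (d • (c : P) • e i - y i) = 0 := by
    simp only [smul_sub, Finset.sum_sub_distrib, hyx, Finset.smul_sum, smul_comm d (f _), sub_self]
  obtain ⟨k, a, z, hz, ha⟩ := Module.Flat.isTrivialRelation_of_sum_smul_eq_zero hrel
  let u : q.primeCompl := ⟨d, hd⟩ * c * b
  refine ⟨k, a, fun j ↦ IsLocalizedModule.mk' g (π (z j)) u, fun i ↦ ?_, ha⟩
  rw [← IsLocalizedModule.smul_inj g u]
  calc u • m i = g (π (d • (c : P) • e i - y i)) := by
        simp only [u, map_sub, map_smul, he, hn, LinearMap.mem_ker.1 (hy i), sub_zero,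
          mul_smul, Submonoid.smul_def]
    _ = u • ∑ j, a i j • IsLocalizedModule.mk' g (π (z j)) u := by
        simp only [hz, map_sum, LinearMap.map_smul_of_tower, Finset.smul_sum, smul_comm u,
          IsLocalizedModule.mk'_cancel']

end TorOneVanishesAt

theorem exists_linearIndepOn_smul_mem_span {D V κ : Type*} [CommRing D] [IsDomain D]
    [AddCommGroup V] [Module D V] (v : κ → V) (K : Finset κ) :
    ∃ T : Finset κ, LinearIndepOn D v T ∧
      ∃ a ≠ (0 : D), ∀ i ∈ K, a • v i ∈ Submodule.span D (v '' T) := by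
  classical
  obtain ⟨T, hT, hspan⟩ := exists_maximal_linearIndepOn D fun i : K ↦ v i
  lift T to Finset K using T.toFinite
  have h (i : K) : ∃ a ≠ (0 : D), a • v i ∈ Submodule.span D ((fun i : K ↦ v i) '' T) := by
    by_cases hi : i ∈ T
    · exact ⟨1, one_ne_zero, (one_smul D (v i)).symm ▸ Submodule.subset_span ⟨i, hi, rfl⟩⟩
    · exact hspan i hi
  choose a ha hav using h
  refine ⟨T.map (.subtype _), ?_, ∏ i, a i, Finset.prod_ne_zero_iff.2 fun i _ ↦ ha i,
    fun i hi ↦ ?_⟩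
  · rw [Finset.coe_map]
    exact hT.image_of_comp _ _
  obtain ⟨c, hc⟩ := Finset.dvd_prod_of_mem a (Finset.mem_univ ⟨i, hi⟩)
  rw [hc, mul_comm, mul_smul, Finset.coe_map, Set.image_image]
  exact Submodule.smul_mem _ _ (hav ⟨i, hi⟩)

theorem exists_smul_sub_sum_mem (R : Type*) {S κ : Type*} [CommRing R] [CommRing S] [Algebra R S]
    (p : Ideal S) [p.IsPrime] (K : Finset κ) (r : κ → S) :
    ∃ (s : R) (T : Finset κ) (b : κ → κ → R), s ∉ p.under R ∧
      (∀ j ∈ K, s • r j - ∑ t ∈ T, b j t • r t ∈ p) ∧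
      ∀ c : κ → R, ∑ t ∈ T, c t • r t ∈ p → ∀ t ∈ T, c t ∈ p.under R := by
  obtain ⟨T, hT, s, hs, hspan⟩ :=
    exists_linearIndepOn_smul_mem_span (D := R ⧸ p.under R) (fun j ↦ Ideal.Quotient.mk p (r j)) K
  obtain ⟨s, rfl⟩ := Ideal.Quotient.mk_surjective s
  have hmk (a : R) (x : S) : Ideal.Quotient.mk (p.under R) a • Ideal.Quotient.mk p x =
      Ideal.Quotient.mk p (a • x) := by
    rw [Algebra.smul_def, Algebra.smul_def, map_mul]
    rfl
  have hcomb : ∀ j, ∃ b : κ → R, j ∈ K → s • r j - ∑ t ∈ T, b t • r t ∈ p := by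
    intro j
    by_cases hj : j ∈ K
    · obtain ⟨b, hb⟩ := (Submodule.mem_span_image_finset_iff_exists_fun' _).1 (hspan j hj)
      choose b' hb' using fun t ↦ Ideal.Quotient.mk_surjective (b t)
      refine ⟨b', fun _ ↦ ?_⟩
      simp only [← hb', hmk, ← map_sum] at hb
      exact Ideal.Quotient.mk_eq_mk_iff_sub_mem _ _ |>.1 hb.symm
    · exact ⟨0, fun h ↦ (hj h).elim⟩
  choose b hb using hcomb
  refine ⟨s, T, b, fun h ↦ hs (Ideal.Quotient.eq_zero_iff_mem.2 h), hb, fun c hc t ht ↦ ?_⟩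
  refine Ideal.Quotient.eq_zero_iff_mem.1
    (linearIndepOn_finset_iff.1 hT (fun t ↦ Ideal.Quotient.mk _ (c t)) ?_ t ht)
  simpa only [hmk, ← map_sum, Ideal.Quotient.eq_zero_iff_mem] using hc

section CoefficientExtension

open MvPolynomial

theorem mem_map_smul_top_iff_forall_coeff_mem {R σ ι : Type*} [CommRing R] [Finite ι] {J : Ideal R}
    {x : ι → MvPolynomial σ R} :
    x ∈ J.map (algebraMap R (MvPolynomial σ R)) • (⊤ : Submodule (MvPolynomial σ R) _) ↔
      ∀ i m, coeff m (x i) ∈ J := by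
  classical
  have := Fintype.ofFinite ι
  simp only [← mem_map_C_iff, algebraMap_eq]
  refine ⟨fun hx i ↦ ?_, fun hx ↦ ?_⟩
  · induction hx using Submodule.smul_induction_on' with
    | smul d hd m _ => exact Ideal.mul_mem_right _ _ hd
    | add u _ v _ hu hv => exact add_mem hu hv
  · rw [pi_eq_sum_univ' x]
    exact sum_mem fun i _ ↦ Submodule.smul_mem_smul (hx i) trivial

attribute [local instance] MvPolynomial.algebraMvPolynomial

variable {R S T σ ι : Type*} [CommRing R] [CommRing S] [CommRing T] [Algebra R S]

variable (S) in
/-- The map `R[σ]^ι → S[σ]^ι` applying `R → S` to all coefficients. -/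
noncomputable def coeffMap : (ι → MvPolynomial σ R) →ₗ[MvPolynomial σ R] (ι → MvPolynomial σ S) :=
  (Algebra.linearMap (MvPolynomial σ R) (MvPolynomial σ S)).compLeft ι

variable (S) in
/-- The submodule of `S[σ]^ι` generated by `L ⊆ R[σ]^ι`; the quotient by it is the base change of
`R[σ]^ι / L` to `S`. -/
noncomputable def extendCoeffs (L : Submodule (MvPolynomial σ R) (ι → MvPolynomial σ R)) :
    Submodule (MvPolynomial σ S) (ι → MvPolynomial σ S) :=
  Submodule.span _ (coeffMap S '' (L : Set (ι → MvPolynomial σ R)))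

theorem coeff_coeffMap (x : ι → MvPolynomial σ R) (i : ι) (m : σ →₀ ℕ) :
    coeff m (coeffMap S x i) = algebraMap R S (coeff m (x i)) :=
  coeff_map _ _ _

theorem coeffMap_coeffMap [Algebra S T] [Algebra R T] [IsScalarTower R S T]
    (x : ι → MvPolynomial σ R) :
    coeffMap T (coeffMap S x) = coeffMap T x := by
  ext i m
  simp only [coeff_coeffMap, ← IsScalarTower.algebraMap_apply]

theorem coeffMap_injective (h : Function.Injective (algebraMap R S)) :
    Function.Injective (coeffMap S : (ι → MvPolynomial σ R) → _) :=
  (map_injective _ h).comp_left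

theorem coeffMap_mem_map_smul_top_iff [Finite ι] {J : Ideal S} {x : ι → MvPolynomial σ R} :
    coeffMap S x ∈ J.map (algebraMap S (MvPolynomial σ S)) • (⊤ : Submodule (MvPolynomial σ S) _) ↔
      x ∈ (J.under R).map (algebraMap R (MvPolynomial σ R)) •
        (⊤ : Submodule (MvPolynomial σ R) _) := by
  simp only [mem_map_smul_top_iff_forall_coeff_mem, coeff_coeffMap, Ideal.mem_comap, Ideal.under]

variable {L : Submodule (MvPolynomial σ R) (ι → MvPolynomial σ R)}

theorem coeffMap_mem_extendCoeffs {x : ι → MvPolynomial σ R} (hx : x ∈ L) :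
    coeffMap S x ∈ extendCoeffs S L :=
  Submodule.subset_span ⟨x, hx, rfl⟩

theorem restrictScalars_extendCoeffs :
    (extendCoeffs S L).restrictScalars S =
      Submodule.span S (coeffMap S '' (L : Set (ι → MvPolynomial σ R))) := by
  refine le_antisymm ?_ (Submodule.span_le_restrictScalars _ _ _)
  rw [extendCoeffs, ← Submodule.span_smul_of_span_eq_top (basisMonomials σ S).span_eq,
    Submodule.span_le]
  rintro _ ⟨_, ⟨m, rfl⟩, _, ⟨x, hx, rfl⟩, rfl⟩
  refine Submodule.subset_span ⟨monomial m 1 • x, L.smul_mem _ hx, ?_⟩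
  rw [map_smul, algebra_compatible_smul (MvPolynomial σ S)]
  simp

theorem mem_map_smul_extendCoeffs_iff {J : Ideal S} {x : ι → MvPolynomial σ S} :
    x ∈ J.map (algebraMap S (MvPolynomial σ S)) • extendCoeffs S L ↔
      ∃ a : L →₀ S, (∀ l, a l ∈ J) ∧
        (a.sum fun l c ↦ c • coeffMap S (l : ι → MvPolynomial σ R)) = x := by
  rw [mem_map_smul_iff, restrictScalars_extendCoeffs, Submodule.mem_ideal_smul_span_iff_exists_sum']
  simp only [exists_prop]
  rfl

theorem coeffMap_mem_map_smul_extendCoeffs [Algebra S T] [Algebra R T] [IsScalarTower R S T]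
    {J : Ideal T} {x : ι → MvPolynomial σ S}
    (hx : x ∈ (J.under S).map (algebraMap S (MvPolynomial σ S)) • extendCoeffs S L) :
    coeffMap T x ∈ J.map (algebraMap T (MvPolynomial σ T)) • extendCoeffs T L := by
  obtain ⟨a, ha, rfl⟩ := mem_map_smul_extendCoeffs_iff.1 hx
  rw [map_finsuppSum, Finsupp.sum]
  refine sum_mem fun l _ ↦ ?_
  rw [LinearMap.map_smul_of_tower, coeffMap_coeffMap, ← algebraMap_smul T]
  exact mem_map_smul_iff.2 (Submodule.smul_mem_smul (ha l) (coeffMap_mem_extendCoeffs l.2))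

theorem exists_smul_sub_sum_smul_coeffMap_mem (p : Ideal S) [p.IsPrime]
    {x : ι → MvPolynomial σ S} (hx : x ∈ extendCoeffs S L) :
    ∃ (s : R) (T : Finset L) (r : L → S) (z : L → L), s ∉ p.under R ∧
      s • x - ∑ t ∈ T, r t • coeffMap S (z t : ι → MvPolynomial σ R) ∈
        p.map (algebraMap S (MvPolynomial σ S)) • extendCoeffs S L ∧
      ∀ c : L → R, ∑ t ∈ T, c t • r t ∈ p → ∀ t ∈ T, c t ∈ p.under R := by
  have htop : x ∈ (⊤ : Ideal S).map (algebraMap S (MvPolynomial σ S)) • extendCoeffs S L := by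
    rwa [Ideal.map_top, Submodule.top_smul]
  obtain ⟨a, -, rfl⟩ := mem_map_smul_extendCoeffs_iff.1 htop
  obtain ⟨s, T, b, hs, hb, hT⟩ := exists_smul_sub_sum_mem R p a.support a
  refine ⟨s, T, a, fun t ↦ ∑ j ∈ a.support, b j t • j, hs, ?_, hT⟩
  have hcomb : s • (a.sum fun l c ↦ c • coeffMap S l.1) -
        ∑ t ∈ T, a t • coeffMap S (∑ j ∈ a.support, b j t • j : L).1 =
      a.support.sum fun j ↦ (s • a j - ∑ t ∈ T, b j t • a t) • coeffMap S j.1 := by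
    simp only [Finsupp.sum, Submodule.coe_sum, map_sum, Submodule.coe_smul_of_tower,
      LinearMap.map_smul_of_tower, Finset.smul_sum, smul_assoc, sub_smul, Finset.sum_sub_distrib,
      Finset.sum_smul]
    rw [Finset.sum_comm]
    simp only [smul_comm (a _) (b _ _)]
  rw [hcomb]
  refine sum_mem fun j hj ↦ ?_
  exact mem_map_smul_iff.2 (Submodule.smul_mem_smul (hb j hj) (coeffMap_mem_extendCoeffs j.2))

theorem torOneVanishesAt_extendCoeffs [Finite ι] {q : Ideal (MvPolynomial σ S)} [q.IsPrime]
    (h : ∀ y ∈ L, y ∈ ((q.under S).under R).map (algebraMap R (MvPolynomial σ R)) •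
        (⊤ : Submodule (MvPolynomial σ R) (ι → MvPolynomial σ R)) →
      coeffMap S y ∈ (q.under S).map (algebraMap S (MvPolynomial σ S)) • extendCoeffs S L) :
    TorOneVanishesAt (q.under S) (extendCoeffs S L) q := by
  intro x hxL hx
  obtain ⟨s, T, r, z, hs, hsx, hr⟩ := exists_smul_sub_sum_smul_coeffMap_mem (q.under S) hxL
  refine ⟨algebraMap S _ (algebraMap R S s), hs, ?_⟩
  -- The `r t` are independent over `R/(𝔭 ∩ R)` modulo `𝔭`, where `𝔭 = q ∩ S`, and `s • x` lies in
  -- `𝔭 F`; so the coefficients of each `z t` lie in `𝔭 ∩ R`, and `h` applies to `z t`.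
  rw [algebraMap_smul, algebraMap_smul, ← sub_add_cancel (s • x)]
  refine add_mem hsx (sum_mem fun t ht ↦ ?_)
  refine Submodule.smul_of_tower_mem _ _ (h _ (z t).2
    (mem_map_smul_top_iff_forall_coeff_mem.2 fun i m ↦ hr (fun t ↦ coeff m ((z t).1 i)) ?_ t ht))
  have hsum : ∑ t ∈ T, r t • coeffMap S (z t : ι → MvPolynomial σ R) ∈
      (q.under S).map (algebraMap S (MvPolynomial σ S)) • (⊤ : Submodule (MvPolynomial σ S) _) := by
    rw [← sub_sub_cancel (s • x) (∑ t ∈ T, _)]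
    refine sub_mem ?_ (Submodule.smul_mono le_rfl le_top hsx)
    exact Submodule.smul_of_tower_mem _ _ hx
  have hcoeff := mem_map_smul_top_iff_forall_coeff_mem.1 hsum i m
  simpa only [Finset.sum_apply, Pi.smul_apply, coeff_sum, coeff_smul, coeff_coeffMap,
    smul_eq_mul, mul_comm (r _), ← Algebra.smul_def] using hcoeff

theorem TorOneVanishesAt.exists_smul_coeffMap_mem [Finite ι] [Algebra S T] [Algebra R T]
    [IsScalarTower R S T] {J : Ideal T} {q : Ideal (MvPolynomial σ T)}
    (h : TorOneVanishesAt (J.under S) (extendCoeffs S L) (q.under (MvPolynomial σ S)))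
    {x : ι → MvPolynomial σ S} (hxL : x ∈ extendCoeffs S L)
    (hx : coeffMap T x ∈
      J.map (algebraMap T (MvPolynomial σ T)) • (⊤ : Submodule (MvPolynomial σ T) _)) :
    ∃ s ∉ q, s • coeffMap T x ∈ J.map (algebraMap T (MvPolynomial σ T)) • extendCoeffs T L := by
  obtain ⟨s, hs, hsx⟩ := h x hxL (coeffMap_mem_map_smul_top_iff.1 hx)
  refine ⟨algebraMap _ _ s, hs, ?_⟩
  rw [algebraMap_smul, ← map_smul]
  exact coeffMap_mem_map_smul_extendCoeffs hsx

theorem exists_finset_forall_subalgebra_coeffMap_eq {J : Ideal S} {x : ι → MvPolynomial σ S}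
    (hx : x ∈ J.map (algebraMap S (MvPolynomial σ S)) • extendCoeffs S L) :
    ∃ T : Finset S, ∀ R' : Subalgebra R S, (T : Set S) ⊆ R' →
      ∃ y ∈ (J.under R').map (algebraMap R' (MvPolynomial σ R')) • extendCoeffs R' L,
        coeffMap S y = x := by
  classical
  obtain ⟨a, ha, rfl⟩ := mem_map_smul_extendCoeffs_iff.1 hx
  refine ⟨a.support.image a, fun R' hR' ↦ ?_⟩
  have haR' (l : L) : a l ∈ R' := by
    by_cases hl : a l = 0
    · exact hl ▸ zero_mem R'
    · exact hR' (Finset.mem_image_of_mem a (Finsupp.mem_support_iff.2 hl))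
  refine ⟨∑ l ∈ a.support, (⟨a l, haR' l⟩ : R') • coeffMap R' l.1, sum_mem fun l _ ↦
    mem_map_smul_iff.2 (Submodule.smul_mem_smul (ha l) (coeffMap_mem_extendCoeffs l.2)), ?_⟩
  simp only [map_sum, LinearMap.map_smul_of_tower, coeffMap_coeffMap]
  rfl

theorem exists_finset_forall_subalgebra_coeffMap_mem {J : Ideal S}
    {N : Submodule (MvPolynomial σ R) (ι → MvPolynomial σ R)} (hN : N.FG)
    (h : ∀ y ∈ N, coeffMap S y ∈ J.map (algebraMap S (MvPolynomial σ S)) • extendCoeffs S L) :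
    ∃ T : Finset S, ∀ R' : Subalgebra R S, (T : Set S) ⊆ R' → ∀ y ∈ N,
      coeffMap R' y ∈ (J.under R').map (algebraMap R' (MvPolynomial σ R')) • extendCoeffs R' L := by
  classical
  obtain ⟨G, rfl⟩ := hN
  choose! T hT using fun g (hg : g ∈ G) ↦
    exists_finset_forall_subalgebra_coeffMap_eq (h g (Submodule.subset_span hg))
  refine ⟨G.biUnion T, fun R' hR' y hy ↦ ?_⟩
  suffices Submodule.span _ (G : Set (ι → MvPolynomial σ R)) ≤
      (((J.under R').map (algebraMap R' (MvPolynomial σ R')) • extendCoeffs R' L).restrictScalars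
        (MvPolynomial σ R)).comap (coeffMap R') from this hy
  refine Submodule.span_le.2 fun g hg ↦ ?_
  obtain ⟨z, hz, hzg⟩ := hT g hg R' fun t ht ↦ hR' (Finset.mem_biUnion.2 ⟨g, hg, ht⟩)
  rw [← coeffMap_coeffMap (S := R') (T := S) g] at hzg
  rwa [coeffMap_injective Subtype.val_injective hzg] at hz

theorem TorOneVanishesAt.extendCoeffs_of_isNoetherianRing [IsNoetherianRing R] [Finite σ] [Finite ι]
    {q : Ideal (MvPolynomial σ S)} [q.IsPrime]
    (h : ∀ y ∈ L, y ∈ ((q.under S).under R).map (algebraMap R (MvPolynomial σ R)) •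
        (⊤ : Submodule (MvPolynomial σ R) (ι → MvPolynomial σ R)) →
      coeffMap S y ∈ (q.under S).map (algebraMap S (MvPolynomial σ S)) • extendCoeffs S L)
    (J : Ideal S) : TorOneVanishesAt J (extendCoeffs S L) q := by
  classical
  intro x hxL hx
  have htop : x ∈ (⊤ : Ideal S).map (algebraMap S (MvPolynomial σ S)) • extendCoeffs S L := by
    rwa [Ideal.map_top, Submodule.top_smul]
  obtain ⟨T, hT⟩ := exists_finset_forall_subalgebra_coeffMap_eq htop
  obtain ⟨U, hU⟩ := exists_finset_forall_subalgebra_coeffMap_mem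
    (N := L ⊓ ((q.under S).under R).map (algebraMap R (MvPolynomial σ R)) • ⊤)
    (IsNoetherian.noetherian _) fun y hy ↦ h y hy.1 hy.2
  let R' := Algebra.adjoin R ((T ∪ U : Finset S) : Set S)
  have : IsNoetherianRing R' := isNoetherianRing_of_fg (Subalgebra.fg_adjoin_finset _)
  have hTU : ((T ∪ U : Finset S) : Set S) ⊆ R' := Algebra.subset_adjoin
  rw [Finset.coe_union, Set.union_subset_iff] at hTU
  obtain ⟨y, hy, rfl⟩ := hT R' hTU.1
  refine TorOneVanishesAt.exists_smul_coeffMap_mem (.of_under ?_ _) (Submodule.smul_le_right hy) hx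
  refine torOneVanishesAt_extendCoeffs fun z hzL hz ↦ ?_
  have hq : (q.under (MvPolynomial σ R')).under R' = (q.under S).under R' := by
    rw [Ideal.under_under, Ideal.under_under]
  rw [hq] at hz ⊢
  rw [Ideal.under_under] at hz
  exact hU R' hTU.2 z ⟨hzL, hz⟩

theorem exists_isNoetherianRing_extendCoeffs_eq [Finite ι]
    {L : Submodule (MvPolynomial σ S) (ι → MvPolynomial σ S)} (hL : L.FG) :
    ∃ (R : Subalgebra ℤ S) (_ : IsNoetherianRing R)
      (L₀ : Submodule (MvPolynomial σ R) (ι → MvPolynomial σ R)), extendCoeffs S L₀ = L := by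
  classical
  have := Fintype.ofFinite ι
  obtain ⟨G, rfl⟩ := hL
  let T : Finset S := G.biUnion fun g ↦ Finset.univ.biUnion fun i ↦ (g i).coeffs
  let R := Algebra.adjoin ℤ (T : Set S)
  refine ⟨R, isNoetherianRing_of_fg (Subalgebra.fg_adjoin_finset _),
    ((Submodule.span (MvPolynomial σ S) (G : Set (ι → MvPolynomial σ S))).restrictScalars
      (MvPolynomial σ R)).comap (coeffMap S),
    le_antisymm (Submodule.span_le.2 ?_) (Submodule.span_le.2 fun g hg ↦ ?_)⟩
  · rintro _ ⟨y, hy, rfl⟩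
    exact hy
  have hlift : ∀ i, ∃ y : MvPolynomial σ R, map (algebraMap R S) y = g i := fun i ↦ by
    rw [← Set.mem_range, mem_range_map_iff_coeffs_subset]
    exact fun c hc ↦ ⟨⟨c, Algebra.subset_adjoin (Finset.mem_biUnion.2
      ⟨g, hg, Finset.mem_biUnion.2 ⟨i, Finset.mem_univ i, hc⟩⟩)⟩, rfl⟩
  choose y hy using hlift
  have hyg : coeffMap S y = g := funext hy
  rw [← hyg]
  refine coeffMap_mem_extendCoeffs ?_
  rw [Submodule.mem_comap, hyg]
  exact Submodule.subset_span hg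

theorem TorOneVanishesAt.of_under_of_fg [Finite σ] [Finite ι]
    {L : Submodule (MvPolynomial σ S) (ι → MvPolynomial σ S)} (hL : L.FG)
    {q : Ideal (MvPolynomial σ S)} [q.IsPrime]
    (h : (q.under S).map (algebraMap S (MvPolynomial σ S)) • ⊤ ⊓ L ≤
      (q.under S).map (algebraMap S (MvPolynomial σ S)) • L) (J : Ideal S) :
    TorOneVanishesAt J L q := by
  obtain ⟨R, _, L₀, rfl⟩ := exists_isNoetherianRing_extendCoeffs_eq hL
  refine .extendCoeffs_of_isNoetherianRing (fun y hyL hy ↦ ?_) J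
  exact h ⟨coeffMap_mem_map_smul_top_iff.2 hy, coeffMap_mem_extendCoeffs hyL⟩

end CoefficientExtension

section LocalCriterion

variable {A B M : Type*} [CommRing A] [CommRing B] [Algebra A B] [AddCommGroup M] [Module B M]
  [Module A M] [IsScalarTower A B M]

theorem flat_localizedModule_of_presentation {σ ι : Type*} [Finite σ] [Finite ι]
    [Algebra (MvPolynomial σ A) B] [IsScalarTower A (MvPolynomial σ A) B]
    [Module (MvPolynomial σ A) M] [IsScalarTower (MvPolynomial σ A) B M]
    [IsScalarTower A (MvPolynomial σ A) M]
    (hB : Function.Surjective (algebraMap (MvPolynomial σ A) B))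
    {π : (ι → MvPolynomial σ A) →ₗ[MvPolynomial σ A] M} (hπ : Function.Surjective π)
    (hker : (LinearMap.ker π).FG) (q : Ideal B) [q.IsPrime]
    (hq : Function.Injective (idealTensorMul (q.under A) M)) :
    Module.Flat A (LocalizedModule q.primeCompl M) := by
  let Q := q.under (MvPolynomial σ A)
  have hQ : Q.under A = q.under A := Ideal.under_under q
  have hvanish (J : Ideal A) : TorOneVanishesAt J (LinearMap.ker π) Q := by
    refine .of_under_of_fg hker (fun x hx ↦ ?_) J
    rw [Submodule.mem_inf, mem_map_smul_iff, hQ] at hx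
    rw [mem_map_smul_iff, hQ]
    exact smul_top_inf_ker_le_smul_ker (f := π.restrictScalars A) hπ hq hx
  have : IsLocalizedModule (Algebra.algebraMapSubmonoid B Q.primeCompl)
      (LocalizedModule.mkLinearMap q.primeCompl M) := by
    rw [Ideal.algebraMapSubmonoid_primeCompl_of_liesOver_surjective q Q hB]
    infer_instance
  have := IsLocalizedModule.restrictScalars Q.primeCompl
    (LocalizedModule.mkLinearMap q.primeCompl M)
  exact flat_of_torOneVanishesAt hπ
    ((LocalizedModule.mkLinearMap q.primeCompl M).restrictScalars (MvPolynomial σ A)) hvanish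

theorem flat_localizedModule_of_idealTensorMul_injective [Algebra.FinitePresentation A B]
    [Module.FinitePresentation B M] (q : Ideal B) [q.IsPrime]
    (hq : Function.Injective (idealTensorMul (q.under A) M)) :
    Module.Flat A (LocalizedModule q.primeCompl M) := by
  obtain ⟨n, f, hf, hker⟩ := Algebra.FinitePresentation.out (R := A) (A := B)
  let P := MvPolynomial (Fin n) A
  let : Algebra P B := f.toAlgebra
  let : Module P M := Module.compHom M f.toRingHom
  have : IsScalarTower P B M := .of_algebraMap_smul fun _ _ ↦ rfl
  have : IsScalarTower A P B := .of_algebraMap_eq fun a ↦ (f.commutes a).symm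
  have : IsScalarTower A P M := .of_algebraMap_smul fun a m ↦ by
    rw [← algebraMap_smul B, ← IsScalarTower.algebraMap_apply, algebraMap_smul]
  have : Module.FinitePresentation P B :=
    Module.finitePresentation_of_surjective (Algebra.linearMap P B) hf hker
  have := Module.FinitePresentation.trans (R := P) (M := M) B
  obtain ⟨r, π, hπ⟩ := Module.Finite.exists_fin' P M
  exact flat_localizedModule_of_presentation hf hπ (Module.FinitePresentation.fg_ker π hπ) q hq

theorem flat_localizedModule_of_flat_localization_comap (q : Ideal B) [q.IsPrime]
    (h : letI : Module (Localization.AtPrime (q.comap (algebraMap A B)))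
          (LocalizedModule q.primeCompl M) :=
        Module.compHom _ (Localization.localRingHom (q.comap (algebraMap A B)) q
          (algebraMap A B) rfl)
      Module.Flat (Localization.AtPrime (q.comap (algebraMap A B)))
        (LocalizedModule q.primeCompl M)) :
    Module.Flat A (LocalizedModule q.primeCompl M) := by
  let p := q.comap (algebraMap A B)
  let : Module (Localization.AtPrime p) (LocalizedModule q.primeCompl M) :=
    Module.compHom _ (Localization.localRingHom p q (algebraMap A B) rfl)
  have : IsScalarTower A (Localization.AtPrime p) (LocalizedModule q.primeCompl M) :=
    .of_algebraMap_smul fun a m ↦ by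
      change Localization.localRingHom p q (algebraMap A B) rfl (algebraMap A _ a) • m = a • m
      rw [Localization.localRingHom_to_map, algebraMap_smul, algebraMap_smul]
  have := IsLocalization.flat (Localization.AtPrime p) p.primeCompl
  exact Module.Flat.trans A (Localization.AtPrime p) _

theorem relative_flatness_criterion_general [Algebra.FinitePresentation A B]
    [Module.FinitePresentation B M] {I : Ideal A} [Module.Flat (A ⧸ I) ((A ⧸ I) ⊗[A] M)]
    (hI : Function.Injective (idealTensorMul I M))
    (h : ∀ (q : Ideal B) [q.IsMaximal], ¬ I ≤ q.under A →
      Module.Flat A (LocalizedModule q.primeCompl M)) :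
    Module.Flat A M := by
  refine Module.flat_of_isLocalized_maximal B M (fun q _ ↦ LocalizedModule q.primeCompl M)
    (fun q _ ↦ LocalizedModule.mkLinearMap q.primeCompl M) fun q _ ↦ ?_
  by_cases hq : I ≤ q.under A
  · exact flat_localizedModule_of_idealTensorMul_injective q (idealTensorMul_injective_of_le hq hI)
  · exact h q hq

end LocalCriterion

/-- **Relative flatness criterion** (Remark `GeneralFlatnessCrit`): let `A` be a commutative
ring, `I ⊆ A` an ideal, `B` a finitely presented commutative `A`-algebra, and `M` a finitely
presented `B`-module (viewed as an `A`-module by restriction of scalars). If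
(a) `M/IM ≅ (A/I) ⊗[A] M` is a flat `A/I`-module and the canonical map `I ⊗[A] M → M` is
injective, and (b) for every prime `𝔮` of `B` whose contraction `𝔭` to `A` does not contain
`I`, the localization `M_𝔮` is a flat `A_𝔭`-module, then `M` is a flat `A`-module. -/
theorem relative_flatness_criterion {A B : Type} [CommRing A] [CommRing B] [Algebra A B]
    [Algebra.FinitePresentation A B] (I : Ideal A)
    (M : Type) [AddCommGroup M] [Module B M] [Module A M] [IsScalarTower A B M]
    [Module.FinitePresentation B M]
    (h1 : Module.Flat (A ⧸ I) ((A ⧸ I) ⊗[A] M))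
    (h2 : Function.Injective (TensorProduct.lift ((LinearMap.lsmul A M).comp I.subtype)))
    (h3 : ∀ (q : Ideal B) [q.IsPrime], ¬ I ≤ q.comap (algebraMap A B) →
      letI : Module (Localization.AtPrime (q.comap (algebraMap A B)))
          (LocalizedModule q.primeCompl M) :=
        Module.compHom _ (Localization.localRingHom (q.comap (algebraMap A B)) q
          (algebraMap A B) rfl)
      Module.Flat (Localization.AtPrime (q.comap (algebraMap A B)))
        (LocalizedModule q.primeCompl M)) :
    Module.Flat A M := by
  exact relative_flatness_criterion_general h2 fun q _ hq ↦
    flat_localizedModule_of_flat_localization_comap q (h3 q hq)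
end

section
/- Let A be a commutative ring. Suppose given a family (M_j)_{j∈ℤ} of A-modules and A-linear maps t_j : M_{j+1} → M_j. Let N = ⊕_{j∈ℤ} M_j and let φ : N → N be the A-linear endomorphism that sends the component M_{j+1} into M_j via t_j; regard N as a module over the polynomial ring A[X] with X acting by φ. Then N is a finitely generated projective A[X]-module if and only if the following three conditions hold: (i) every M_j is a finitely generated projective A-module; (ii) every t_j is injective and its cokernel is a finitely generated projective A-module; (iii) there exists j₀ such that M_j = 0 for all j ≥ j₀, and there exists j₁ such that t_j is bijective for all j ≤ j₁. -/
open DirectSum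

/-- A filtered `A`-module: a `ℤ`-indexed family of `A`-modules `M j` with transition maps
`t j : M j →ₗ[A] M (j-1)`.  The endomorphism `φ` of `N = ⨁ j, M j` sends the component `M j`
into `M (j-1)` via `t j`. -/
noncomputable def filtShift {A : Type} [CommRing A] (M : ℤ → Type)
    [∀ j, AddCommGroup (M j)] [∀ j, Module A (M j)]
    (t : ∀ j : ℤ, M j →ₗ[A] M (j - 1)) : (⨁ j, M j) →ₗ[A] ⨁ j, M j :=
  DirectSum.toModule A ℤ _ fun j => (DirectSum.lof A ℤ M (j - 1)).comp (t j)

open Polynomial TensorProduct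

/-!
The theorem is read off from the cokernel `Q` of the action `φ` of `X` on `N`. If `N` is finite
projective over `A[X]`, then `φ` is injective, by flatness, and `Q` is finite projective over `A`.
Conversely, a locally nilpotent left inverse of `φ` identifies `N` with `A[X] ⊗ Q`, every element
being a sum of `φⁿ qₙ` with `qₙ` in a complement of `φ N`. For the graded module, `Q` is the direct
sum of the cokernels of the `t j`, and retractions of the `t j` supply the left inverse: it raises
degrees, hence is locally nilpotent once `M j = 0` for large `j`.
-/

section PolynomialModules

variable {A N N' : Type*} [CommRing A] [AddCommGroup N] [Module A N] [AddCommGroup N']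
  [Module A N'] (φ : N →ₗ[A] N)

theorem exists_finite_forall_mem_invtSubmodule_eq_top [Module.Finite A[X] (Module.AEval' φ)] :
    ∃ S : Set N, S.Finite ∧ ∀ P ∈ Module.End.invtSubmodule φ, S ⊆ P → P = ⊤ := by
  obtain ⟨S, hS⟩ := Module.Finite.fg_top (R := A[X]) (M := Module.AEval' φ)
  refine ⟨Module.AEval'.of φ ⁻¹' S,
    S.finite_toSet.preimage (Module.AEval'.of φ).injective.injOn, fun P hP hSP => ?_⟩
  have hle : Submodule.span A[X] S ≤ Module.AEval.mapSubmodule A N φ ⟨P, hP⟩ :=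
    Submodule.span_le.mpr fun y hy =>
      (Module.AEval.mem_mapSubmodule_apply A N φ).mpr (hSP (by simpa using hy))
  refine Submodule.eq_top_iff'.mpr fun x => ?_
  simpa using hle (hS ▸ Submodule.mem_top : Module.AEval'.of φ x ∈ Submodule.span A[X] S)

theorem finite_quotient_range_of_finite_aeval [Module.Finite A[X] (Module.AEval' φ)] :
    Module.Finite A (N ⧸ LinearMap.range φ) := by
  obtain ⟨S, hS, htop⟩ := exists_finite_forall_mem_invtSubmodule_eq_top φ
  have hinv : LinearMap.range φ ⊔ Submodule.span A S ∈ Module.End.invtSubmodule φ :=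
    fun x _ => Submodule.mem_sup_left (LinearMap.mem_range_self φ x)
  have hmap : (Submodule.span A S).map (LinearMap.range φ).mkQ = ⊤ :=
    (Submodule.map_mkQ_eq_top _ _).mpr
      (htop _ hinv fun x hx => Submodule.mem_sup_right (Submodule.subset_span hx))
  exact ⟨hmap ▸ (Submodule.fg_span hS).map _⟩

theorem injective_of_flat_aeval [Module.Flat A[X] (Module.AEval' φ)] :
    Function.Injective φ := by
  have hX : IsSMulRegular (Module.AEval' φ) (X : A[X]) :=
    Module.Flat.isSMulRegular_of_isRegular isRegular_X
  intro x y hxy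
  apply (Module.AEval'.of φ).injective
  apply hX
  simp only [Module.AEval'.X_smul_of, hxy]

variable {φ}

/-- The `A[X]`-linear map between `N` and `N'`, with `X` acting by `φ` and `φ'`, given by an
`A`-linear map that intertwines `φ` and `φ'`. -/
noncomputable def aevalMap {φ' : N' →ₗ[A] N'} (f : N →ₗ[A] N') (hf : ∀ x, f (φ x) = φ' (f x)) :
    Module.AEval' φ →ₗ[A[X]] Module.AEval' φ' :=
  LinearMap.ofAEval φ ((Module.AEval'.of φ').toLinearMap ∘ₗ f) fun x => by
    simp [Module.AEval'.X_smul_of, hf]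

variable (φ) in
-- A surjection `p` onto the cokernel is `A[X]`-linear for the zero action of `X`, so that the
-- projection from `N` lifts through `p`; the lift kills `φ N` as `X` acts by zero on its target.
theorem projective_quotient_range_of_projective_aeval [Module.Projective A[X] (Module.AEval' φ)] :
    Module.Projective A (N ⧸ LinearMap.range φ) := by
  refine .of_lifting_property'' fun p hp => ?_
  let zeroF : Module.End A ((N ⧸ LinearMap.range φ) →₀ A) := 0
  let zeroQ : Module.End A (N ⧸ LinearMap.range φ) := 0
  let pX : Module.AEval' zeroF →ₗ[A[X]] Module.AEval' zeroQ :=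
    aevalMap p fun x => by simp [zeroF, zeroQ]
  let mkX : Module.AEval' φ →ₗ[A[X]] Module.AEval' zeroQ :=
    aevalMap (LinearMap.range φ).mkQ fun x => by simp [zeroQ]
  have hpX : Function.Surjective pX :=
    (Module.AEval'.of zeroQ).surjective.comp (hp.comp (Module.AEval'.of zeroF).symm.surjective)
  obtain ⟨s, hs⟩ := Module.projective_lifting_property pX mkX hpX
  let sA : N →ₗ[A] (N ⧸ LinearMap.range φ) →₀ A :=
    (Module.AEval'.of zeroF).symm.toLinearMap ∘ₗ s.restrictScalars A ∘ₗ
      (Module.AEval'.of φ).toLinearMap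
  have hsA : LinearMap.range φ ≤ LinearMap.ker sA := by
    rintro _ ⟨x, rfl⟩
    have hX (y : Module.AEval' zeroF) : (X : A[X]) • y = 0 := by
      obtain ⟨y, rfl⟩ := (Module.AEval'.of zeroF).surjective y
      simp [Module.AEval'.X_smul_of, zeroF]
    simp [sA, ← Module.AEval'.X_smul_of, hX]
  refine ⟨(LinearMap.range φ).liftQ sA hsA, Submodule.linearMap_qext _ ?_⟩
  ext x
  exact (Module.AEval'.of zeroQ).injective (LinearMap.congr_fun hs (Module.AEval'.of φ x))

variable {ψ : N →ₗ[A] N} (hψφ : Function.LeftInverse ψ φ)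

/-- The section of `N → N ⧸ φ N` with image `ker ψ`, for a left inverse `ψ` of `φ`. -/
def cokernelSection : N ⧸ LinearMap.range φ →ₗ[A] N :=
  (LinearMap.range φ).liftQ (LinearMap.id - φ ∘ₗ ψ) <| by
    rintro _ ⟨x, rfl⟩
    simp [hψφ x]

theorem cokernelSection_mk (x : N) :
    cokernelSection hψφ (Submodule.Quotient.mk x) = x - φ (ψ x) :=
  rfl

theorem mk_cokernelSection (q : N ⧸ LinearMap.range φ) :
    Submodule.Quotient.mk (cokernelSection hψφ q) = q := by
  obtain ⟨x, rfl⟩ := Submodule.Quotient.mk_surjective _ q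
  simp [cokernelSection_mk]

theorem leftInverse_cokernelSection (q : N ⧸ LinearMap.range φ) :
    ψ (cokernelSection hψφ q) = 0 := by
  obtain ⟨x, rfl⟩ := Submodule.Quotient.mk_surjective _ q
  simp [cokernelSection_mk, hψφ (ψ x)]

theorem mk_pow_leftInverse_pow_cokernelSection (q : N ⧸ LinearMap.range φ) (k n : ℕ) :
    Submodule.Quotient.mk (p := LinearMap.range φ)
      ((ψ ^ k) ((φ ^ n) (cokernelSection hψφ q))) = if n = k then q else 0 := by
  induction k generalizing n with
  | zero =>
    cases n with
    | zero => simpa using mk_cokernelSection hψφ q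
    | succ n => simp [pow_succ']
  | succ k ih =>
    cases n with
    | zero => simp [pow_succ, leftInverse_cokernelSection]
    | succ n => simpa [pow_succ ψ, pow_succ' φ, hψφ _] using ih n

theorem mk_pow_leftInverse_aeval_cokernelSection (q : N ⧸ LinearMap.range φ) (f : A[X]) (k : ℕ) :
    Submodule.Quotient.mk (p := LinearMap.range φ)
      ((ψ ^ k) (aeval φ f (cokernelSection hψφ q))) = f.coeff k • q := by
  induction f using Polynomial.induction_on' with
  | add f g hf hg => simp [add_smul, hf, hg]
  | monomial n a =>
    simp [mk_pow_leftInverse_pow_cokernelSection, coeff_monomial, aeval_monomial]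

/-- The `A[X]`-linear map to `N`, with `X` acting by `φ`, from the polynomials with coefficients in
`N ⧸ φ N`, extending `cokernelSection`. -/
noncomputable def tensorCokernelToAEval :
    A[X] ⊗[A] (N ⧸ LinearMap.range φ) →ₗ[A[X]] Module.AEval' φ :=
  ((Module.AEval'.of φ).toLinearMap ∘ₗ cokernelSection hψφ).liftBaseChange A[X]

theorem tensorCokernelToAEval_tmul (f : A[X]) (q : N ⧸ LinearMap.range φ) :
    tensorCokernelToAEval hψφ (f ⊗ₜ q) = f • Module.AEval'.of φ (cokernelSection hψφ q) :=
  rfl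

open PolynomialModule in
theorem coeff_eq_mk_pow_tensorCokernelToAEval (p : A[X] ⊗[A] (N ⧸ LinearMap.range φ)) (k : ℕ) :
    (polynomialTensorProductLEquivPolynomialModule A _ p).coeff k =
      Submodule.Quotient.mk
        ((ψ ^ k) ((Module.AEval'.of φ).symm (tensorCokernelToAEval hψφ p))) := by
  induction p with
  | zero => simp
  | add p q hp hq => simp [hp, hq]
  | tmul f q =>
    have htmul : polynomialTensorProductLEquivPolynomialModule A _ (f ⊗ₜ[A] q) =
        f • single A 0 q := rfl
    simp [htmul, smul_single_apply, tensorCokernelToAEval_tmul, Module.AEval.of_symm_smul,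
      mk_pow_leftInverse_aeval_cokernelSection]

theorem tensorCokernelToAEval_injective : Function.Injective (tensorCokernelToAEval hψφ) := by
  refine (injective_iff_map_eq_zero _).mpr fun p hp => ?_
  rw [← LinearEquiv.map_eq_zero_iff
    (PolynomialModule.polynomialTensorProductLEquivPolynomialModule A _)]
  ext k
  simp [coeff_eq_mk_pow_tensorCokernelToAEval hψφ, hp]

theorem tensorCokernelToAEval_surjective (hψ : ∀ x, ∃ n : ℕ, (ψ ^ n) x = 0) :
    Function.Surjective (tensorCokernelToAEval hψφ) := by
  have hmem (n : ℕ) (x : N) (hx : (ψ ^ n) x = 0) :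
      Module.AEval'.of φ x ∈ LinearMap.range (tensorCokernelToAEval hψφ) := by
    induction n generalizing x with
    | zero =>
      obtain rfl : x = 0 := by simpa using hx
      simp
    | succ n ih =>
      have hdecomp : Module.AEval'.of φ x =
          tensorCokernelToAEval hψφ (1 ⊗ₜ Submodule.Quotient.mk x) +
            (X : A[X]) • Module.AEval'.of φ (ψ x) := by
        simp [tensorCokernelToAEval_tmul, cokernelSection_mk, Module.AEval'.X_smul_of]
      rw [hdecomp]
      exact add_mem (LinearMap.mem_range_self _ _)
        (Submodule.smul_mem _ _ (ih (ψ x) (by simpa [pow_succ] using hx)))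
  intro y
  obtain ⟨n, hn⟩ := hψ ((Module.AEval'.of φ).symm y)
  simpa using hmem n _ hn

/-- A module on which `X` acts with a locally nilpotent left inverse is extended from `A`. -/
noncomputable def tensorCokernelEquivAEval (hψ : ∀ x, ∃ n : ℕ, (ψ ^ n) x = 0) :
    A[X] ⊗[A] (N ⧸ LinearMap.range φ) ≃ₗ[A[X]] Module.AEval' φ :=
  .ofBijective (tensorCokernelToAEval hψφ)
    ⟨tensorCokernelToAEval_injective hψφ, tensorCokernelToAEval_surjective hψφ hψ⟩

theorem finite_projective_aeval_of_leftInverse (hψφ : Function.LeftInverse ψ φ)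
    (hψ : ∀ x, ∃ n : ℕ, (ψ ^ n) x = 0)
    [Module.Finite A (N ⧸ LinearMap.range φ)] [Module.Projective A (N ⧸ LinearMap.range φ)] :
    Module.Finite A[X] (Module.AEval' φ) ∧ Module.Projective A[X] (Module.AEval' φ) :=
  ⟨.equiv (tensorCokernelEquivAEval hψφ hψ), .of_equiv' (tensorCokernelEquivAEval hψφ hψ)⟩

end PolynomialModules

section Cokernels

variable {A M N : Type*} [Ring A] [AddCommGroup M] [Module A M] [AddCommGroup N] [Module A N]
  {t : M →ₗ[A] N}

theorem exists_leftInverse_of_projective_quotient_range (ht : Function.Injective t)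
    [Module.Projective A (N ⧸ LinearMap.range t)] :
    ∃ r : N →ₗ[A] M, Function.LeftInverse r t := by
  obtain ⟨r, hr⟩ :=
    (((LinearMap.exact_map_mkQ_range t).split_tfae ht (Submodule.mkQ_surjective _)).out 0 1).mp
      (Module.projective_lifting_property _ _ (Submodule.mkQ_surjective _))
  exact ⟨r, LinearMap.congr_fun hr⟩

theorem finite_projective_of_quotient_range (ht : Function.Injective t)
    [Module.Finite A M] [Module.Projective A M]
    [Module.Finite A (N ⧸ LinearMap.range t)] [Module.Projective A (N ⧸ LinearMap.range t)] :
    Module.Finite A N ∧ Module.Projective A N := by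
  obtain ⟨e, -⟩ :=
    (((LinearMap.exact_map_mkQ_range t).split_tfae ht (Submodule.mkQ_surjective _)).out 0 2).mp
      (Module.projective_lifting_property _ _ (Submodule.mkQ_surjective _))
  exact ⟨.equiv e.symm, .of_equiv' e.symm⟩

end Cokernels

section DirectSums

variable {A ι : Type*} {M N P : ι → Type*} [Ring A]
  [∀ i, AddCommGroup (M i)] [∀ i, Module A (M i)] [∀ i, AddCommGroup (N i)] [∀ i, Module A (N i)]
  [∀ i, AddCommGroup (P i)] [∀ i, Module A (P i)]

theorem exact_lmap {f : ∀ i, M i →ₗ[A] N i} {g : ∀ i, N i →ₗ[A] P i}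
    (hfg : ∀ i, Function.Exact (f i) (g i)) : Function.Exact (lmap f) (lmap g) := by
  simp only [LinearMap.exact_iff] at hfg ⊢
  simp only [ker_lmap, range_lmap, hfg]

theorem exists_finset_forall_notMem_eq_zero {S : Set (⨁ i, M i)} (hS : S.Finite) :
    ∃ s : Finset ι, ∀ x ∈ S, ∀ i ∉ s, x i = 0 := by
  classical
  refine ⟨hS.toFinset.biUnion DFinsupp.support, fun x hx i hi => ?_⟩
  by_contra hne
  exact hi (Finset.mem_biUnion.mpr
    ⟨x, hS.mem_toFinset.mpr hx, DFinsupp.mem_support_iff.mpr hne⟩)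

theorem finite_nontrivial_of_finite_directSum [Module.Finite A (⨁ i, M i)] :
    {i | Nontrivial (M i)}.Finite := by
  classical
  obtain ⟨S, hS⟩ := Module.Finite.fg_top (R := A) (M := ⨁ i, M i)
  obtain ⟨s, hs⟩ := exists_finset_forall_notMem_eq_zero S.finite_toSet
  refine s.finite_toSet.subset fun i hi => ?_
  by_contra his
  have hle : Submodule.span A S ≤ LinearMap.ker (component A ι M i) :=
    Submodule.span_le.mpr fun x hx => hs x hx i his
  refine not_subsingleton_iff_nontrivial.mpr hi (subsingleton_of_forall_eq 0 fun x => ?_)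
  simpa using hle (hS ▸ Submodule.mem_top : lof A ι M i x ∈ Submodule.span A S)

theorem finite_directSum_of_finite_nontrivial [∀ i, Module.Finite A (M i)]
    (hM : {i | Nontrivial (M i)}.Finite) : Module.Finite A (⨁ i, M i) := by
  classical
  have htop : (⨆ i ∈ hM.toFinset, LinearMap.range (lof A ι M i)) = ⊤ := by
    refine top_le_iff.mp (DFinsupp.iSup_range_lsingle (R := A) (M := M) ▸ iSup_le fun i => ?_)
    by_cases hi : Nontrivial (M i)
    · exact le_iSup₂_of_le i (by simpa using hi) le_rfl
    · have := not_nontrivial_iff_subsingleton.mp hi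
      rw [LinearMap.range_eq_bot.mpr (Subsingleton.elim _ _)]
      exact bot_le
  exact ⟨htop ▸ Submodule.fg_biSup _ _ fun i _ => Module.Finite.iff_fg.mp inferInstance⟩

theorem finite_directSum_iff :
    Module.Finite A (⨁ i, M i) ↔
      (∀ i, Module.Finite A (M i)) ∧ {i | Nontrivial (M i)}.Finite := by
  classical
  refine ⟨fun _ => ⟨fun i => ?_, finite_nontrivial_of_finite_directSum (A := A)⟩,
    fun ⟨_, hM⟩ => finite_directSum_of_finite_nontrivial hM⟩
  exact .of_surjective (component A ι M i) fun x => ⟨lof A ι M i x, by simp⟩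

end DirectSums

section GradedModules

variable {A : Type*} [Ring A] {M : ℤ → Type*} [∀ j, AddCommGroup (M j)] [∀ j, Module A (M j)]

variable (A M) in
/-- The reindexing of `⨁ j, M j` whose component of degree `j` is `M (j - 1)`; it turns
`filtShift` into the diagonal map with components `t j`. -/
noncomputable def shiftEquiv : (⨁ j, M j) ≃ₗ[A] ⨁ j, M (j - 1) :=
  lequivCongrLeft A (Equiv.subRight (1 : ℤ)).symm

variable (r : ∀ j : ℤ, M (j - 1) →ₗ[A] M j)

/-- The endomorphism of `⨁ j, M j` of degree `1` with components `r j`, a left inverse of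
`filtShift M t` when each `r j` is a left inverse of `t j`. -/
noncomputable def filtUnshift : (⨁ j, M j) →ₗ[A] ⨁ j, M j :=
  lmap r ∘ₗ (shiftEquiv A M).toLinearMap

theorem filtUnshift_apply (x : ⨁ j, M j) (j : ℤ) : filtUnshift r x j = r j (x (j - 1)) :=
  rfl

theorem filtUnshift_pow_apply_eq_zero {x : ⨁ j, M j} {d : ℤ} (hx : ∀ j < d, x j = 0) (n : ℕ) :
    ∀ j < d + n, (filtUnshift r ^ n) x j = 0 := by
  induction n with
  | zero => simpa using hx
  | succ n ih =>
    intro j hj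
    rw [pow_succ', Module.End.mul_apply, filtUnshift_apply, ih _ (by push_cast at hj; omega),
      map_zero]

theorem exists_filtUnshift_pow_eq_zero {j₀ : ℤ} (h₀ : ∀ j ≥ j₀, Subsingleton (M j))
    (x : ⨁ j, M j) : ∃ n : ℕ, (filtUnshift r ^ n) x = 0 := by
  obtain ⟨s, hs⟩ := exists_finset_forall_notMem_eq_zero (Set.finite_singleton x)
  obtain ⟨d, hd⟩ := s.bddBelow
  refine ⟨(j₀ - d).toNat, ?_⟩
  ext j
  rcases le_or_gt j₀ j with hj | hj
  · have := h₀ j hj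
    exact Subsingleton.elim _ _
  · exact filtUnshift_pow_apply_eq_zero r
      (fun k hk => hs x rfl k fun hks => hk.not_ge (hd hks)) _ j (by omega)

variable {t : ∀ j : ℤ, M j →ₗ[A] M (j - 1)}

theorem exists_forall_le_surjective
    (ht : {j | Nontrivial (M (j - 1) ⧸ LinearMap.range (t j))}.Finite) :
    ∃ j₁ : ℤ, ∀ j ≤ j₁, Function.Surjective (t j) := by
  obtain ⟨d, hd⟩ := ht.bddBelow
  refine ⟨d - 1, fun j hj => ?_⟩
  by_contra hsurj
  have hdj := hd (Submodule.Quotient.nontrivial_iff.mpr (mt LinearMap.range_eq_top.mp hsurj))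
  omega

theorem finite_nontrivial_quotient_range {j₀ j₁ : ℤ} (h₀ : ∀ j ≥ j₀, Subsingleton (M j))
    (h₁ : ∀ j ≤ j₁, Function.Surjective (t j)) :
    {j | Nontrivial (M (j - 1) ⧸ LinearMap.range (t j))}.Finite := by
  refine (Set.finite_Icc j₁ j₀).subset fun j hj => ⟨?_, ?_⟩ <;> by_contra! hlt
  · exact Submodule.Quotient.nontrivial_iff.mp hj (LinearMap.range_eq_top.mpr (h₁ j hlt.le))
  · have := h₀ (j - 1) (by omega)
    exact not_nontrivial _ hj

theorem finite_projective_of_forall_quotient_range {j₀ : ℤ} (h₀ : ∀ j ≥ j₀, Subsingleton (M j))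
    (ht : ∀ j, Function.Injective (t j))
    (hcoker : ∀ j, Module.Finite A (M (j - 1) ⧸ LinearMap.range (t j)) ∧
      Module.Projective A (M (j - 1) ⧸ LinearMap.range (t j))) (j : ℤ) :
    Module.Finite A (M j) ∧ Module.Projective A (M j) := by
  have hge (j : ℤ) (hj : j₀ ≤ j) : Module.Finite A (M j) ∧ Module.Projective A (M j) :=
    have := h₀ j hj
    ⟨inferInstance, inferInstance⟩
  rcases le_total j₀ j with hj | hj
  · exact hge j hj
  · induction j, hj using Int.leInductionDown with
    | base => exact hge j₀ le_rfl
    | pred j _ ih =>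
      obtain ⟨_, _⟩ := ih
      obtain ⟨_, _⟩ := hcoker j
      exact finite_projective_of_quotient_range (ht j)

end GradedModules

section FilteredModules

variable {A : Type} [CommRing A] {M : ℤ → Type} [∀ j, AddCommGroup (M j)] [∀ j, Module A (M j)]
  (t : ∀ j : ℤ, M j →ₗ[A] M (j - 1))

theorem shiftEquiv_comp_filtShift : (shiftEquiv A M).toLinearMap ∘ₗ filtShift M t = lmap t := by
  ext j x : 2
  have hlof (y : M (j - 1)) :
      (shiftEquiv A M).symm (lof A ℤ (fun i => M (i - 1)) j y) = lof A ℤ M (j - 1) y :=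
    lequivCongrLeft_symm_lof A (M := M) (h := (Equiv.subRight (1 : ℤ)).symm)
  simp [filtShift, ← hlof]

theorem filtShift_apply (x : ⨁ j, M j) (j : ℤ) : filtShift M t x (j - 1) = t j (x j) :=
  DFunLike.congr_fun (LinearMap.congr_fun (shiftEquiv_comp_filtShift t) x) j

theorem filtShift_injective_iff :
    Function.Injective (filtShift M t) ↔ ∀ j, Function.Injective (t j) := by
  rw [← lmap_injective, ← shiftEquiv_comp_filtShift, LinearMap.coe_comp, LinearEquiv.coe_coe,
    EquivLike.comp_injective]

/-- The cokernel of `filtShift` is graded by the cokernels of the transition maps. -/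
noncomputable def quotientRangeFiltShiftEquiv :
    ((⨁ j, M j) ⧸ LinearMap.range (filtShift M t)) ≃ₗ[A]
      ⨁ j, M (j - 1) ⧸ LinearMap.range (t j) :=
  (Submodule.Quotient.equiv _ _ (shiftEquiv A M) (by
    rw [← LinearMap.range_comp, shiftEquiv_comp_filtShift])).trans <|
  (exact_lmap fun j => LinearMap.exact_map_mkQ_range (t j)).linearEquivOfSurjective
    ((lmap_surjective _).mpr fun j => Submodule.mkQ_surjective _)

theorem finite_projective_quotient_range_filtShift_iff :
    (Module.Finite A ((⨁ j, M j) ⧸ LinearMap.range (filtShift M t)) ∧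
      Module.Projective A ((⨁ j, M j) ⧸ LinearMap.range (filtShift M t))) ↔
      (∀ j, Module.Finite A (M (j - 1) ⧸ LinearMap.range (t j)) ∧
        Module.Projective A (M (j - 1) ⧸ LinearMap.range (t j))) ∧
      {j | Nontrivial (M (j - 1) ⧸ LinearMap.range (t j))}.Finite := by
  have hproj : Module.Projective A ((⨁ j, M j) ⧸ LinearMap.range (filtShift M t)) ↔
      Module.Projective A (⨁ j, M (j - 1) ⧸ LinearMap.range (t j)) :=
    ⟨fun _ => .of_equiv' (quotientRangeFiltShiftEquiv t),
      fun _ => .of_equiv' (quotientRangeFiltShiftEquiv t).symm⟩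
  rw [Module.Finite.equiv_iff (quotientRangeFiltShiftEquiv t), hproj, finite_directSum_iff,
    Module.Projective.directSum_iff, forall_and, and_right_comm]

theorem exists_forall_ge_subsingleton_of_finite
    [Module.Finite A[X] (Module.AEval' (filtShift M t))] :
    ∃ j₀ : ℤ, ∀ j ≥ j₀, Subsingleton (M j) := by
  obtain ⟨S, hS, htop⟩ := exists_finite_forall_mem_invtSubmodule_eq_top (filtShift M t)
  obtain ⟨s, hs⟩ := exists_finset_forall_notMem_eq_zero hS
  obtain ⟨d, hd⟩ := s.bddAbove
  let P : Submodule A (⨁ j, M j) := ⨅ j > d, LinearMap.ker (component A ℤ M j)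
  have mem_P (x : ⨁ j, M j) : x ∈ P ↔ ∀ j > d, x j = 0 := by
    simp [P, apply_eq_component A]
  have hP : P ∈ Module.End.invtSubmodule (filtShift M t) := fun x hx => by
    refine (mem_P _).mpr fun j hj => ?_
    rw [← add_sub_cancel_right j 1, filtShift_apply, (mem_P x).mp hx _ (by omega), map_zero]
  have hSP : S ⊆ P := fun x hx =>
    (mem_P x).mpr fun j hj => hs x hx j fun hjs => hj.not_ge (hd hjs)
  refine ⟨d + 1, fun j hj => subsingleton_of_forall_eq 0 fun x => ?_⟩
  have hx : lof A ℤ M j x ∈ P := htop P hP hSP ▸ Submodule.mem_top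
  simpa using (mem_P _).mp hx j (by omega)

variable {t}

theorem filtUnshift_leftInverse_filtShift {r : ∀ j : ℤ, M (j - 1) →ₗ[A] M j}
    (hr : ∀ j, Function.LeftInverse (r j) (t j)) :
    Function.LeftInverse (filtUnshift r) (filtShift M t) := fun x => by
  ext j
  rw [filtUnshift_apply, filtShift_apply, hr]

end FilteredModules

/-- **Characterization of filtered vector bundles** (Proposition `CharFilteredVB`):
with `N = ⨁ j, M j` viewed as a module over `A[X]` where `X` acts by the shift `φ`
(via `Module.AEval'`), `N` is a finitely generated projective `A[X]`-module if and only if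
(i) every `M j` is finitely generated projective over `A`, (ii) every `t j` is injective with
finitely generated projective cokernel, and (iii) `M j = 0` for all sufficiently large `j` and
`t j` is bijective for all sufficiently small `j`. -/
theorem char_filtered_vector_bundles {A : Type} [CommRing A] (M : ℤ → Type)
    [∀ j, AddCommGroup (M j)] [∀ j, Module A (M j)]
    (t : ∀ j : ℤ, M j →ₗ[A] M (j - 1)) :
    (Module.Finite (Polynomial A) (Module.AEval' (filtShift M t)) ∧
      Module.Projective (Polynomial A) (Module.AEval' (filtShift M t))) ↔
      ((∀ j : ℤ, Module.Finite A (M j) ∧ Module.Projective A (M j)) ∧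
        (∀ j : ℤ, Function.Injective (t j) ∧
          (Module.Finite A (M (j - 1) ⧸ LinearMap.range (t j)) ∧
            Module.Projective A (M (j - 1) ⧸ LinearMap.range (t j)))) ∧
        ((∃ j₀ : ℤ, ∀ j ≥ j₀, Subsingleton (M j)) ∧
          (∃ j₁ : ℤ, ∀ j ≤ j₁, Function.Bijective (t j)))) := by
  constructor
  · rintro ⟨_, _⟩
    obtain ⟨hcoker, hfin⟩ := (finite_projective_quotient_range_filtShift_iff t).mp
      ⟨finite_quotient_range_of_finite_aeval _, projective_quotient_range_of_projective_aeval _⟩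
    have hinj := (filtShift_injective_iff t).mp (injective_of_flat_aeval _)
    obtain ⟨j₀, h₀⟩ := exists_forall_ge_subsingleton_of_finite t
    obtain ⟨j₁, h₁⟩ := exists_forall_le_surjective hfin
    exact ⟨finite_projective_of_forall_quotient_range h₀ hinj hcoker,
      fun j => ⟨hinj j, hcoker j⟩, ⟨j₀, h₀⟩, j₁, fun j hj => ⟨hinj j, h₁ j hj⟩⟩
  · rintro ⟨-, ht, ⟨j₀, h₀⟩, j₁, h₁⟩
    have hr (j : ℤ) : ∃ r : M (j - 1) →ₗ[A] M j, Function.LeftInverse r (t j) :=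
      have := (ht j).2.2
      exists_leftInverse_of_projective_quotient_range (ht j).1
    choose r hr using hr
    obtain ⟨_, _⟩ := (finite_projective_quotient_range_filtShift_iff t).mpr
      ⟨fun j => (ht j).2, finite_nontrivial_quotient_range h₀ fun j hj => (h₁ j hj).2⟩
    exact finite_projective_aeval_of_leftInverse (filtUnshift_leftInverse_filtShift hr)
      (exists_filtUnshift_pow_eq_zero r h₀)
end

section
/- Let A be a commutative ring and z ∈ A a nonzerodivisor, and let B = A[X,Y]/(XY − z). Then: (1) the image of X in B is a nonzerodivisor; (2) the two-element sequence consisting of the images of X and Y is a weakly regular sequence on B (X is a nonzerodivisor on B and Y is a nonzerodivisor on B/(X)); (3) the quotient B/(X,Y) is isomorphic, as an A-algebra, to A/(z). -/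
/-- The commutative ring `B = A[X,Y]/(XY - z)`. -/
abbrev ReesRing (A : Type) [CommRing A] (z : A) : Type :=
  MvPolynomial (Fin 2) A ⧸
    Ideal.span {(MvPolynomial.X 0 * MvPolynomial.X 1 - MvPolynomial.C z :
      MvPolynomial (Fin 2) A)}

/-- The image of `X` in `B = A[X,Y]/(XY - z)`. -/
noncomputable def reesX (A : Type) [CommRing A] (z : A) : ReesRing A z :=
  Ideal.Quotient.mk _ (MvPolynomial.X 0)

/-- The image of `Y` in `B = A[X,Y]/(XY - z)`. -/
noncomputable def reesY (A : Type) [CommRing A] (z : A) : ReesRing A z :=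
  Ideal.Quotient.mk _ (MvPolynomial.X 1)

/-!
Modulo `X` the relation `XY - z` becomes `-z`, a nonzerodivisor on `A[X,Y]/(X)`. Since `X` is itself
a nonzerodivisor, the roles can be exchanged: `X` is a nonzerodivisor modulo `XY - z`.
Killing `X` in `B` kills `z = XY` and nothing else in `A[Y]`, so `B/(X) ≃ (A/(z))[T]` with `Y ↦ T`.
Hence `Y` is a nonzerodivisor on `B/(X)`, and killing it too leaves `A/(z)`.
-/

section NonZeroDivisors

lemma mk_mem_nonZeroDivisors_swap {R : Type*} [CommRing R] {a b : R}
    (ha : a ∈ nonZeroDivisors R)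
    (hb : Ideal.Quotient.mk (Ideal.span {a}) b ∈ nonZeroDivisors (R ⧸ Ideal.span {a})) :
    Ideal.Quotient.mk (Ideal.span {b}) a ∈ nonZeroDivisors (R ⧸ Ideal.span {b}) := by
  refine mem_nonZeroDivisors_iff_right.mpr <| Ideal.Quotient.mk_surjective.forall.mpr
    fun f hf => ?_
  rw [← map_mul, Ideal.Quotient.eq_zero_iff_dvd] at hf
  obtain ⟨g, hg⟩ := hf
  have a_dvd_g : a ∣ g := by
    rw [← Ideal.Quotient.eq_zero_iff_dvd, ← mul_left_mem_nonZeroDivisors_eq_zero_iff hb,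
      ← map_mul, ← hg, Ideal.Quotient.eq_zero_iff_dvd]
    exact dvd_mul_left a f
  obtain ⟨k, rfl⟩ := a_dvd_g
  rw [Ideal.Quotient.eq_zero_iff_dvd]
  refine ⟨k, (mul_cancel_left_mem_nonZeroDivisors ha).mp ?_⟩
  linear_combination hg

open MvPolynomial

variable {σ R : Type*} [CommRing R] {r : R}

lemma mk_C_mem_nonZeroDivisors_quotient_span_X_image (hr : r ∈ nonZeroDivisors R) (s : Set σ) :
    Ideal.Quotient.mk (Ideal.span (X '' s : Set (MvPolynomial σ R))) (C r) ∈
      nonZeroDivisors (MvPolynomial σ R ⧸ Ideal.span (X '' s : Set (MvPolynomial σ R))) := by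
  refine mem_nonZeroDivisors_iff_left.mpr <| Ideal.Quotient.mk_surjective.forall.mpr
    fun f hf => ?_
  rw [← map_mul, Ideal.Quotient.eq_zero_iff_mem, mem_ideal_span_X_image] at hf
  rw [Ideal.Quotient.eq_zero_iff_mem, mem_ideal_span_X_image]
  have support_eq : (C r * f).support = f.support := by
    ext m
    simp only [mem_support_iff, coeff_C_mul, ne_eq, mul_left_mem_nonZeroDivisors_eq_zero_iff hr]
  rwa [support_eq] at hf

lemma mk_X_mem_nonZeroDivisors_quotient_span_X_mul_sub_C (hr : r ∈ nonZeroDivisors R) (i : σ)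
    (q : MvPolynomial σ R) :
    Ideal.Quotient.mk (Ideal.span {X i * q - C r}) (X i) ∈
      nonZeroDivisors (MvPolynomial σ R ⧸ Ideal.span {X i * q - C r}) := by
  refine mk_mem_nonZeroDivisors_swap isRegular_X.mem_nonZeroDivisors ?_
  have mk_eq : Ideal.Quotient.mk (Ideal.span {X i}) (X i * q - C r) =
      Ideal.Quotient.mk (Ideal.span {X i}) (C (-r)) := by
    simp only [map_sub, map_mul, map_neg, Ideal.Quotient.mk_singleton_self, zero_mul, zero_sub]
  have neg_mem : -r ∈ nonZeroDivisors R := by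
    simpa only [neg_one_mul] using mul_mem isUnit_one.neg.mem_nonZeroDivisors hr
  rw [mk_eq, ← Set.image_singleton]
  exact mk_C_mem_nonZeroDivisors_quotient_span_X_image neg_mem {i}

end NonZeroDivisors

section KillingGenerators

open Polynomial

variable {A B : Type*} [CommRing A] [CommRing B] [Algebra A B] {z : A} {x y : B}

/-- If `B` is generated over `A` by `x` and `y` and `x` divides `z`, then killing `x` also kills
`z`, so `B/(x)` is a quotient of the polynomial ring over `A/(z)` in the image of `y`. A
homomorphism `φ` sending `x` to `0` and `y` to the variable shows that it is the whole polynomial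
ring. -/
noncomputable def quotientSpanSingletonEquivPolynomial (φ : B →ₐ[A] (A ⧸ Ideal.span {z})[X])
    (φ_x : φ x = 0) (φ_y : φ y = X) (hxz : x ∣ algebraMap A B z)
    (hgen : Algebra.adjoin A {x, y} = ⊤) :
    (B ⧸ Ideal.span {x}) ≃ₐ[A] (A ⧸ Ideal.span {z})[X] :=
  let toPolynomial : (B ⧸ Ideal.span {x}) →ₐ[A] (A ⧸ Ideal.span {z})[X] :=
    Ideal.Quotient.liftₐ _ φ <| (Ideal.span_singleton_le_iff_mem (RingHom.ker φ)).mpr φ_x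
  have toPolynomial_mk (b : B) : toPolynomial (Ideal.Quotient.mk _ b) = φ b := rfl
  have algebraMap_z : algebraMap A (B ⧸ Ideal.span {x}) z = 0 :=
    (Ideal.Quotient.eq_zero_iff_dvd x _).mpr hxz
  let ofCoeff : (A ⧸ Ideal.span {z}) →ₐ[A] (B ⧸ Ideal.span {x}) :=
    Ideal.Quotient.liftₐ _ (Algebra.ofId A _) <|
      (Ideal.span_singleton_le_iff_mem (RingHom.ker (Algebra.ofId A _))).mpr algebraMap_z
  AlgEquiv.ofAlgHom toPolynomial
    (eval₂AlgHom ofCoeff (Ideal.Quotient.mk _ y) fun _ => Commute.all _ _)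
    (Polynomial.algHom_ext' (Ideal.Quotient.algHom_ext _ (Subsingleton.elim _ _)) <| by
      simp [toPolynomial_mk, φ_y])
    (Ideal.Quotient.algHom_ext _ <| AlgHom.ext_of_adjoin_eq_top hgen <| by
      rintro _ (rfl | rfl)
      · simp
      · simp [toPolynomial_mk, φ_y])

variable (A) in
/-- The third isomorphism theorem for an ideal with two generators: quotienting by `(x, y)` is
quotienting first by `x` and then by the image of `y`. -/
noncomputable def quotientSpanPairEquivQuotQuot (x y : B) :
    (B ⧸ Ideal.span {x, y}) ≃ₐ[A]
      (B ⧸ Ideal.span {x}) ⧸ Ideal.span {Ideal.Quotient.mk (Ideal.span {x}) y} :=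
  (Ideal.quotientEquivAlgOfEq A (Ideal.span_insert _ _)).trans <|
    (DoubleQuot.quotQuotEquivQuotSupₐ A (Ideal.span {x}) (Ideal.span {y})).symm.trans <|
      Ideal.quotientEquivAlgOfEq A <| (Ideal.map_span _ _).trans <|
        congrArg Ideal.span (Set.image_singleton ..)

/-- If `B/(x)` is a polynomial ring over `R` in the image of `y`, then `B/(x, y)` is `R`. -/
noncomputable def quotientSpanPairEquivOfPolynomial {R : Type*} [CommRing R] [Algebra A R]
    (e : (B ⧸ Ideal.span {x}) ≃ₐ[A] R[X]) (e_y : e (Ideal.Quotient.mk _ y) = X) :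
    (B ⧸ Ideal.span {x, y}) ≃ₐ[A] R :=
  have span_eq : Ideal.span {X - C 0} =
      (Ideal.span {Ideal.Quotient.mk (Ideal.span {x}) y}).map
        (e : (B ⧸ Ideal.span {x}) →+* R[X]) := by
    rw [Ideal.map_span, Set.image_singleton, C_0, sub_zero]
    exact congrArg (fun p => Ideal.span {p}) e_y.symm
  (quotientSpanPairEquivQuotQuot A x y).trans <|
    (Ideal.quotientEquivAlg _ _ e span_eq).trans <|
      (quotientSpanXSubCAlgEquiv 0).restrictScalars A

end KillingGenerators

namespace ReesRing

variable {A : Type} [CommRing A] {z : A}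

lemma reesX_mul_reesY : reesX A z * reesY A z = algebraMap A (ReesRing A z) z :=
  (map_mul _ _ _).symm.trans <| Ideal.Quotient.eq.mpr (Ideal.mem_span_singleton_self _)

lemma adjoin_reesX_reesY : Algebra.adjoin A {reesX A z, reesY A z} = ⊤ := by
  have range_X : Set.range (MvPolynomial.X : Fin 2 → MvPolynomial (Fin 2) A) = {.X 0, .X 1} := by
    ext; simp [Fin.exists_fin_two, eq_comm]
  calc Algebra.adjoin A {reesX A z, reesY A z}
    _ = (Algebra.adjoin A (Set.range MvPolynomial.X)).map (Ideal.Quotient.mkₐ A _) := by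
      rw [range_X, AlgHom.map_adjoin, Set.image_pair]
      rfl
    _ = ⊤ := by
      rw [MvPolynomial.adjoin_range_X, Algebra.map_top, AlgHom.range_eq_top]
      exact Ideal.Quotient.mkₐ_surjective A _

open Polynomial in
/-- The homomorphism `A[X,Y]/(XY - z) → (A/(z))[T]` with `X ↦ 0` and `Y ↦ T`, which will turn out
to be the quotient by `X`. -/
noncomputable def toPolynomial (z : A) :
    ReesRing A z →ₐ[A] (A ⧸ Ideal.span {z})[X] :=
  have algebraMap_z : algebraMap A (A ⧸ Ideal.span {z})[X] z = 0 := by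
    rw [IsScalarTower.algebraMap_apply A (A ⧸ Ideal.span {z}), Ideal.Quotient.algebraMap_eq,
      Ideal.Quotient.mk_singleton_self, map_zero]
  let evalZeroX : MvPolynomial (Fin 2) A →ₐ[A] (A ⧸ Ideal.span {z})[X] :=
    MvPolynomial.aeval ![0, X]
  have relation_mem_ker : .X 0 * .X 1 - .C z ∈ RingHom.ker evalZeroX := by
    simp [evalZeroX, RingHom.mem_ker, algebraMap_z]
  Ideal.Quotient.liftₐ _ evalZeroX <|
    (Ideal.span_singleton_le_iff_mem (RingHom.ker evalZeroX)).mpr relation_mem_ker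

lemma toPolynomial_reesX : toPolynomial z (reesX A z) = 0 :=
  MvPolynomial.aeval_X _ 0

lemma toPolynomial_reesY : toPolynomial z (reesY A z) = Polynomial.X :=
  MvPolynomial.aeval_X _ 1

/-- The isomorphism `B/(X) ≃ (A/(z))[T]` for `B = A[X,Y]/(XY - z)`. -/
noncomputable def quotientSpanReesXEquiv (z : A) :
    (ReesRing A z ⧸ Ideal.span {reesX A z}) ≃ₐ[A] Polynomial (A ⧸ Ideal.span {z}) :=
  quotientSpanSingletonEquivPolynomial (toPolynomial z) toPolynomial_reesX toPolynomial_reesY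
    (Dvd.intro _ reesX_mul_reesY) adjoin_reesX_reesY

lemma quotientSpanReesXEquiv_mk_reesY :
    quotientSpanReesXEquiv z (Ideal.Quotient.mk _ (reesY A z)) = Polynomial.X :=
  toPolynomial_reesY

lemma mk_reesY_mem_nonZeroDivisors :
    Ideal.Quotient.mk (Ideal.span {reesX A z}) (reesY A z) ∈
      nonZeroDivisors (ReesRing A z ⧸ Ideal.span {reesX A z}) := by
  refine mem_nonZeroDivisors_of_injective (quotientSpanReesXEquiv z).injective ?_
  rw [quotientSpanReesXEquiv_mk_reesY]
  exact Polynomial.X_mem_nonzeroDivisors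

/-- The isomorphism `B/(X,Y) ≃ A/(z)` for `B = A[X,Y]/(XY - z)`. -/
noncomputable def quotientSpanReesXReesYEquiv (z : A) :
    (ReesRing A z ⧸ Ideal.span {reesX A z, reesY A z}) ≃ₐ[A] (A ⧸ Ideal.span {z}) :=
  quotientSpanPairEquivOfPolynomial (quotientSpanReesXEquiv z) quotientSpanReesXEquiv_mk_reesY

end ReesRing

/-- **Regularity of the sequence `(X, Y)` in the Rees ring** (used for `Re(A,z)`):
for a nonzerodivisor `z` in `A` and `B = A[X,Y]/(XY - z)`: (1) the image of `X` in `B` is a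
nonzerodivisor; (2) the pair `(X, Y)` is a weakly regular sequence on `B`, i.e. `X` is a
nonzerodivisor on `B` and `Y` is a nonzerodivisor on `B/(X)`; (3) `B/(X,Y) ≅ A/(z)` as
`A`-algebras. -/
theorem statement14 {A : Type} [CommRing A] (z : A) (hz : z ∈ nonZeroDivisors A) :
    reesX A z ∈ nonZeroDivisors (ReesRing A z) ∧
      (reesX A z ∈ nonZeroDivisors (ReesRing A z) ∧
        Ideal.Quotient.mk (Ideal.span {reesX A z}) (reesY A z) ∈
          nonZeroDivisors (ReesRing A z ⧸ Ideal.span {reesX A z})) ∧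
      Nonempty ((ReesRing A z ⧸ Ideal.span {reesX A z, reesY A z}) ≃ₐ[A]
        (A ⧸ Ideal.span {z})) := by
  have reesX_mem : reesX A z ∈ nonZeroDivisors (ReesRing A z) :=
    mk_X_mem_nonZeroDivisors_quotient_span_X_mul_sub_C hz 0 _
  exact ⟨reesX_mem, ⟨reesX_mem, ReesRing.mk_reesY_mem_nonZeroDivisors⟩,
    ⟨ReesRing.quotientSpanReesXReesYEquiv z⟩⟩
end
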